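/- The operator L̃ is a bounded positive self-adjoint operator on L²(I), and B is a compact self-adjoint operator on L²(I). Both L̃ and B commute with the parity operator P. Moreover B ≤ 1 (as a quadratic form), and B ψ = ψ holds if and only if the 2π-periodic extension of V^{−1/2} ψ is a collisional invariant, i.e. satisfies g(x) + g(h(x,z)) − g(z) − g(x−z+h(x,z)) = 0 for almost every (x,z), with g = V^{−1/2}ψ extended periodically. -/

import Mathlib

open MeasureTheory Real Set Filter
open scoped Topology ENNReal ComplexConjugate

noncomputable section

/-- The fundamental periodic cell `I = [0, 2π)`. -/
def II : Set ℝ := Set.Ico 0 (2 * π)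

/-- Lebesgue measure restricted to `I`. -/
def muI : Measure ℝ := volume.restrict II

/-- The dispersion relation `ω(x) = |sin(x/2)|`. -/
def omg (x : ℝ) : ℝ := |Real.sin (x / 2)|

/-- `Ω(x,y,z) = ω(x) + ω(y) − ω(z) − ω(x+y−z)`. -/
def Omg (x y z : ℝ) : ℝ := omg x + omg y - omg z - omg (x + y - z)

/-- The representative of `x` modulo `2π` lying in `[0, 2π)`. -/
def mod2pi (x : ℝ) : ℝ := x - 2 * π * (⌊x / (2 * π)⌋ : ℝ)

/-- `h` on the fundamental cell: `h(x,z) = (z−x)/2 + 2 arcsin( tan(|z−x|/4) cos((x+z)/4) )`. -/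
def h0 (x z : ℝ) : ℝ :=
  (z - x) / 2 + 2 * Real.arcsin (Real.tan (|z - x| / 4) * Real.cos ((x + z) / 4))

/-- The extension of `h` to all of `ℝ²`: `h(x,z) = h(x mod 2π, z mod 2π) − (x − (x mod 2π))`. -/
def hFPU (x z : ℝ) : ℝ := h0 (mod2pi x) (mod2pi z) - (x - mod2pi x)

/-- `F₊(x,y) = (cos(x/2)+cos(y/2))² + 4 sin(x/2) sin(y/2)`. -/
def Fp (x y : ℝ) : ℝ :=
  (Real.cos (x / 2) + Real.cos (y / 2)) ^ 2 + 4 * Real.sin (x / 2) * Real.sin (y / 2)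

/-- `F₋(x,y) = (cos(x/2)+cos(y/2))² − 4 sin(x/2) sin(y/2)`. -/
def Fm (x y : ℝ) : ℝ :=
  (Real.cos (x / 2) + Real.cos (y / 2)) ^ 2 - 4 * Real.sin (x / 2) * Real.sin (y / 2)

/-- The kernel `K₁(x,y) = 4·𝟙(F₋(x,y) > 0)/√(F₋(x,y))`. -/
def K1 (x y : ℝ) : ℝ := if 0 < Fm x y then 4 / Real.sqrt (Fm x y) else 0

/-- The kernel `K₂(x,y) = 2/√(F₊(x,y))`. -/
def K2 (x y : ℝ) : ℝ := 2 / Real.sqrt (Fp x y)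

/-- `V(x) = ∫_I K₂(x,y) dy`. -/
def VV (x : ℝ) : ℝ := ∫ y in II, K2 x y

/-- `W(x) = sin²(x/2)·V(x)`. -/
def WW (x : ℝ) : ℝ := Real.sin (x / 2) ^ 2 * VV x

/-- The `2π`-periodic extension of `V^{−1/2}ψ` to `ℝ`. -/
def periodicVinvHalf (ψ : ℝ → ℂ) (x : ℝ) : ℂ :=
  ((VV (mod2pi x) ^ (-(1 : ℝ) / 2) : ℝ) : ℂ) * ψ (mod2pi x)

/-! Substituting along the collision surface `y = h(x,z)`, `w = x - z + y`, conservation of energy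
gives a Jacobian under which the maps `(x,z) ↦ (x,w), (y,z), (y,w)` preserve the measure
`K₂ dx dz`, while `(x,z) ↦ (x,y), (z,w)` carry it to `K₁ dx dy`. With `g = V^(-1/2) ψ` this gives
`⟨ψ, (1 - B) ψ⟩ = ¼ ∫ |g(x) + g(y) - g(z) - g(w)|² K₂(x,z) dx dz`, so `1 - B = D* D` where `D ψ` is
half the collision defect of `g`: hence `B ≤ 1`, and `B ψ = ψ` exactly when the defect vanishes.
For compactness, the operators with kernels cut off near the singularity of `K₁` are
Hilbert–Schmidt, and by the Schur test they converge to `B` in norm. Finally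
`L̃ = W^(1/2) (1 - B) W^(1/2)`, with every factor commuting with the reflection `x ↦ 2π - x`. -/

/-! ### The collision map on the fundamental cell -/

lemma mod2pi_eq_toIcoMod (x : ℝ) : mod2pi x = toIcoMod two_pi_pos 0 x := by
  rw [toIcoMod, toIcoDiv_eq_floor, mod2pi, sub_zero, zsmul_eq_mul, mul_comm]

lemma mod2pi_mem (x : ℝ) : mod2pi x ∈ II := by
  simpa [mod2pi_eq_toIcoMod, II] using toIcoMod_mem_Ico two_pi_pos 0 x

lemma mod2pi_add_int_mul (x : ℝ) (n : ℤ) : mod2pi (x + n * (2 * π)) = mod2pi x := by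
  simp only [mod2pi_eq_toIcoMod, ← zsmul_eq_mul, toIcoMod_add_zsmul]

lemma mod2pi_of_mem {x : ℝ} (hx : x ∈ II) : mod2pi x = x := by
  rw [mod2pi_eq_toIcoMod, toIcoMod_eq_self, zero_add]
  exact hx

lemma mod2pi_neg {t : ℝ} (ht : 0 < mod2pi t) : mod2pi (-t) = 2 * π - mod2pi t := by
  have hmem : 2 * π - mod2pi t ∈ II := ⟨by linarith [(mod2pi_mem t).2], by linarith⟩
  have hshift : 2 * π - mod2pi t = -t + (1 + ⌊t / (2 * π)⌋ : ℤ) * (2 * π) := by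
    rw [mod2pi]; push_cast; ring
  rw [← mod2pi_of_mem hmem, hshift, mod2pi_add_int_mul]

lemma measurable_mod2pi : Measurable mod2pi := by
  unfold mod2pi
  fun_prop

/-- The arcsine in `h0`, so that `h0 x z = (z - x) / 2 + 2 * scatterAngle x z`. -/
def scatterAngle (x z : ℝ) : ℝ := arcsin (tan (|z - x| / 4) * cos ((x + z) / 4))

/-- The incoming phonon `y = h(x, z)` colliding with `x` into `z`, reduced modulo `2π`. -/
def partner (x z : ℝ) : ℝ := mod2pi (h0 x z)

/-- The second outgoing phonon `x + y - z`, with `y = h(x, z)`, reduced modulo `2π`. -/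
def recoil (x z : ℝ) : ℝ := mod2pi (x - z + h0 x z)

lemma measurable_h0 : Measurable fun p : ℝ × ℝ => h0 p.1 p.2 := by
  have htan : Measurable tan := by
    rw [show tan = fun t => sin t / cos t from funext tan_eq_sin_div_cos]
    fun_prop
  unfold h0
  fun_prop

lemma measurable_partner : Measurable fun p : ℝ × ℝ => partner p.1 p.2 :=
  measurable_mod2pi.comp measurable_h0

lemma measurable_recoil : Measurable fun p : ℝ × ℝ => recoil p.1 p.2 :=
  measurable_mod2pi.comp ((measurable_fst.sub measurable_snd).add measurable_h0)

lemma partner_swap (x z : ℝ) : partner z x = recoil x z := by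
  unfold partner recoil h0
  rw [abs_sub_comm x z, add_comm z x]
  congr 1
  ring

lemma mod2pi_hFPU (x z : ℝ) : mod2pi (hFPU x z) = partner (mod2pi x) (mod2pi z) := by
  have : hFPU x z = h0 (mod2pi x) (mod2pi z) + (-⌊x / (2 * π)⌋ : ℤ) * (2 * π) := by
    rw [hFPU, mod2pi]; push_cast; ring
  rw [this, mod2pi_add_int_mul, partner]

lemma mod2pi_sub_add_hFPU (x z : ℝ) :
    mod2pi (x - z + hFPU x z) = recoil (mod2pi x) (mod2pi z) := by
  have : x - z + hFPU x z = mod2pi x - mod2pi z + h0 (mod2pi x) (mod2pi z)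
      + (-⌊z / (2 * π)⌋ : ℤ) * (2 * π) := by
    rw [hFPU]; unfold mod2pi; push_cast; ring
  rw [this, mod2pi_add_int_mul, recoil]

lemma h0_reflect (x z : ℝ) : h0 (2 * π - x) (2 * π - z) = -h0 x z := by
  unfold h0
  rw [show 2 * π - z - (2 * π - x) = -(z - x) by ring, abs_neg,
    show (2 * π - x + (2 * π - z)) / 4 = π - (x + z) / 4 by ring, cos_pi_sub, mul_neg, arcsin_neg]
  ring

section Ascending

variable {x z : ℝ}

lemma h0_eq_scatterAngle (x z : ℝ) : h0 x z = (z - x) / 2 + 2 * scatterAngle x z := rfl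

lemma abs_cos_quarter_add_lt (hx : 0 < x) (hxz : x < z) (hz : z < 2 * π) :
    |cos ((x + z) / 4)| < cos ((z - x) / 4) := by
  have hsin : 0 < sin (z / 4) * sin (x / 4) :=
    mul_pos (sin_pos_of_pos_of_lt_pi (by linarith) (by linarith))
      (sin_pos_of_pos_of_lt_pi (by linarith) (by linarith))
  have hcos : 0 < cos (z / 4) * cos (x / 4) :=
    mul_pos (cos_pos_of_mem_Ioo ⟨by linarith, by linarith⟩)
      (cos_pos_of_mem_Ioo ⟨by linarith, by linarith⟩)
  rw [show (x + z) / 4 = z / 4 + x / 4 by ring, sub_div, cos_add, cos_sub, abs_lt]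
  constructor <;> linarith

lemma cos_quarter_sub_pos (hx : 0 < x) (hxz : x < z) (hz : z < 2 * π) : 0 < cos ((z - x) / 4) :=
  (abs_nonneg _).trans_lt (abs_cos_quarter_add_lt hx hxz hz)

lemma abs_tan_mul_cos_lt_sin (hx : 0 < x) (hxz : x < z) (hz : z < 2 * π) :
    |tan (|z - x| / 4) * cos ((x + z) / 4)| < sin ((z - x) / 4) := by
  have hcos := cos_quarter_sub_pos hx hxz hz
  have hsin : 0 < sin ((z - x) / 4) := sin_pos_of_pos_of_lt_pi (by linarith) (by linarith)
  rw [abs_of_pos (sub_pos.2 hxz), tan_eq_sin_div_cos, abs_mul, abs_of_pos (div_pos hsin hcos),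
    div_mul_eq_mul_div, div_lt_iff₀ hcos]
  exact mul_lt_mul_of_pos_left (abs_cos_quarter_add_lt hx hxz hz) hsin

lemma abs_scatterAngle_lt (hx : 0 < x) (hxz : x < z) (hz : z < 2 * π) :
    |scatterAngle x z| < (z - x) / 4 := by
  have h := abs_lt.1 (abs_tan_mul_cos_lt_sin hx hxz hz)
  rw [scatterAngle, abs_lt, lt_arcsin_iff_sin_lt' ⟨by linarith, by linarith⟩,
    arcsin_lt_iff_lt_sin' ⟨by linarith, by linarith⟩, sin_neg]
  exact h

lemma sin_scatterAngle_mul_cos (hx : 0 < x) (hxz : x < z) (hz : z < 2 * π) :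
    sin (scatterAngle x z) * cos ((z - x) / 4) = sin ((z - x) / 4) * cos ((x + z) / 4) := by
  have h := abs_lt.1 (abs_tan_mul_cos_lt_sin hx hxz hz)
  have hsin := sin_le_one ((z - x) / 4)
  rw [scatterAngle, sin_arcsin (by linarith) (by linarith), abs_of_pos (sub_pos.2 hxz),
    mul_right_comm, tan_mul_cos (cos_quarter_sub_pos hx hxz hz).ne']

lemma partner_of_lt (hx : 0 < x) (hxz : x < z) (hz : z < 2 * π) : partner x z = h0 x z := by
  have h := abs_lt.1 (abs_scatterAngle_lt hx hxz hz)
  rw [partner, h0_eq_scatterAngle, mod2pi_of_mem ⟨by linarith, by linarith⟩]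

lemma recoil_of_lt (hx : 0 < x) (hxz : x < z) (hz : z < 2 * π) :
    recoil x z = 2 * π + x - z + partner x z := by
  have h := abs_lt.1 (abs_scatterAngle_lt hx hxz hz)
  rw [partner_of_lt hx hxz hz, recoil, ← mod2pi_add_int_mul _ 1, h0_eq_scatterAngle,
    mod2pi_of_mem ⟨by push_cast; linarith, by push_cast; linarith⟩]
  push_cast
  ring

lemma partner_eq_scatterAngle (hx : 0 < x) (hxz : x < z) (hz : z < 2 * π) :
    partner x z = (z - x) / 2 + 2 * scatterAngle x z := partner_of_lt hx hxz hz

lemma partner_mem_Ioo (hx : 0 < x) (hxz : x < z) (hz : z < 2 * π) :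
    partner x z ∈ Ioo 0 (z - x) := by
  have h := abs_lt.1 (abs_scatterAngle_lt hx hxz hz)
  rw [partner_eq_scatterAngle hx hxz hz]
  constructor <;> linarith

lemma recoil_mem_Ioo (hx : 0 < x) (hxz : x < z) (hz : z < 2 * π) :
    recoil x z ∈ Ioo x (2 * π) := by
  have h := partner_mem_Ioo hx hxz hz
  rw [recoil_of_lt hx hxz hz]
  constructor <;> linarith [h.1, h.2]

lemma sin_half_sub_sin_half_recoil (x y z : ℝ) :
    sin (y / 2) - sin ((2 * π + x - z + y) / 2)
      = 2 * cos ((z - x) / 4) * sin ((y - (z - x) / 2) / 2) := by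
  rw [sin_sub_sin, show (y / 2 - (2 * π + x - z + y) / 2) / 2 = (z - x) / 4 - π / 2 by ring,
    show (y / 2 + (2 * π + x - z + y) / 2) / 2 = (y - (z - x) / 2) / 2 + π / 2 by ring,
    sin_sub_pi_div_two, cos_add_pi_div_two]
  ring

lemma sin_half_sub_sin_half (x z : ℝ) :
    sin (z / 2) - sin (x / 2) = 2 * sin ((z - x) / 4) * cos ((x + z) / 4) := by
  rw [sin_sub_sin]
  ring_nf

lemma energy_conservation (hx : 0 < x) (hxz : x < z) (hz : z < 2 * π) :
    sin (x / 2) + sin (partner x z / 2) = sin (z / 2) + sin (recoil x z / 2) := by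
  have hin := sin_half_sub_sin_half x z
  have hout := sin_half_sub_sin_half_recoil x (partner x z) z
  rw [← recoil_of_lt hx hxz hz, partner_eq_scatterAngle hx hxz hz, add_sub_cancel_left,
    mul_div_cancel_left₀ _ two_ne_zero, ← partner_eq_scatterAngle hx hxz hz] at hout
  linarith [sin_scatterAngle_mul_cos hx hxz hz]

lemma partner_eq_of_energy_conservation {y : ℝ} (hx : 0 < x) (hxz : x < z) (hz : z < 2 * π)
    (hy : |y - (z - x) / 2| < π)
    (henergy : sin (x / 2) + sin (y / 2) = sin (z / 2) + sin ((2 * π + x - z + y) / 2)) :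
    partner x z = y := by
  have hcos := cos_quarter_sub_pos hx hxz hz
  have hsin : sin ((y - (z - x) / 2) / 2) = sin (scatterAngle x z) := by
    refine mul_right_cancel₀ hcos.ne' ?_
    linarith [sin_scatterAngle_mul_cos hx hxz hz, sin_half_sub_sin_half x z,
      sin_half_sub_sin_half_recoil x y z]
  have hy := abs_lt.1 hy
  have hθ := abs_lt.1 (abs_scatterAngle_lt hx hxz hz)
  have := injOn_sin ⟨by linarith, by linarith⟩ ⟨by linarith, by linarith⟩ hsin
  rw [partner_eq_scatterAngle hx hxz hz]
  linarith

lemma partner_recoil_of_lt (hx : 0 < x) (hxz : x < z) (hz : z < 2 * π) :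
    partner x (recoil x z) = partner x z := by
  have hy := partner_mem_Ioo hx hxz hz
  have hw := recoil_mem_Ioo hx hxz hz
  have hmomentum := recoil_of_lt hx hxz hz
  refine partner_eq_of_energy_conservation hx hw.1 hw.2
    (abs_lt.2 ⟨by linarith [hy.1, hw.1, hw.2], by linarith [hy.2, hw.1]⟩) ?_
  rw [energy_conservation hx hxz hz,
    show 2 * π + x - recoil x z + partner x z = z by rw [hmomentum]; ring, add_comm]

lemma recoil_recoil_of_lt (hx : 0 < x) (hxz : x < z) (hz : z < 2 * π) :
    recoil x (recoil x z) = z := by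
  have hw := recoil_mem_Ioo hx hxz hz
  rw [recoil_of_lt hx hw.1 hw.2, partner_recoil_of_lt hx hxz hz, recoil_of_lt hx hxz hz]
  ring

lemma cos_half_recoil_lt_cos_half_partner (hx : 0 < x) (hxz : x < z) (hz : z < 2 * π) :
    cos (recoil x z / 2) < cos (partner x z / 2) := by
  have hθ := abs_lt.1 (abs_scatterAngle_lt hx hxz hz)
  rw [← sub_pos, recoil_of_lt hx hxz hz, cos_sub_cos,
    show (partner x z / 2 + (2 * π + x - z + partner x z) / 2) / 2 = scatterAngle x z + π / 2 by
      rw [partner_eq_scatterAngle hx hxz hz]; ring,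
    show (partner x z / 2 - (2 * π + x - z + partner x z) / 2) / 2 = (z - x) / 4 - π / 2 by ring,
    sin_add_pi_div_two, sin_sub_pi_div_two]
  have : 0 < cos (scatterAngle x z) := cos_pos_of_mem_Ioo ⟨by linarith, by linarith⟩
  nlinarith [cos_quarter_sub_pos hx hxz hz]

lemma cos_half_lt_cos_half_partner (hx : 0 < x) (hxz : x < z) (hz : z < 2 * π) :
    cos (z / 2) < cos (partner x z / 2) := by
  have hy := partner_mem_Ioo hx hxz hz
  exact cos_lt_cos_of_nonneg_of_le_pi (by linarith [hy.1]) (by linarith) (by linarith [hy.2])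

lemma differentiableAt_h0 (hx : 0 < x) (hxz : x < z) (hz : z < 2 * π) :
    DifferentiableAt ℝ (h0 x) z := by
  have h := abs_lt.1 (abs_tan_mul_cos_lt_sin hx hxz hz)
  have hsin := sin_le_one ((z - x) / 4)
  have habs : DifferentiableAt ℝ (fun t => |t - x| / 4) z :=
    (((differentiableAt_id.sub_const x).abs (sub_pos.2 hxz).ne').div_const 4)
  have htan : DifferentiableAt ℝ (fun t => tan (|t - x| / 4)) z :=
    DifferentiableAt.comp (g := tan) z (differentiableAt_tan.2 (by
      rw [abs_of_pos (sub_pos.2 hxz)]; exact (cos_quarter_sub_pos hx hxz hz).ne')) habs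
  have harcsin := DifferentiableAt.comp (g := arcsin) z
    ((differentiableAt_arcsin (x := tan (|z - x| / 4) * cos ((x + z) / 4))).2
      ⟨by linarith, by linarith⟩)
    (htan.mul (by fun_prop : DifferentiableAt ℝ (fun t => cos ((x + t) / 4)) z))
  exact ((differentiableAt_id.sub_const x).div_const 2).add (harcsin.const_mul 2)

/- Differentiate the conservation of energy instead of the explicit formula for `h0`. -/
lemma hasDerivAt_partner (hx : 0 < x) (hxz : x < z) (hz : z < 2 * π) :
    HasDerivAt (partner x) ((cos (z / 2) - cos (recoil x z / 2)) /
      (cos (partner x z / 2) - cos (recoil x z / 2))) z := by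
  have hnear : ∀ᶠ t in 𝓝 z, t ∈ Ioo x (2 * π) := Ioo_mem_nhds hxz hz
  have hpartner : HasDerivAt (partner x) (deriv (h0 x) z) z :=
    (differentiableAt_h0 hx hxz hz).hasDerivAt.congr_of_eventuallyEq
      (hnear.mono fun t ht => partner_of_lt hx ht.1 ht.2)
  have hrecoil : HasDerivAt (recoil x) (-1 + deriv (h0 x) z) z :=
    (((hasDerivAt_id z).const_sub (2 * π + x)).add hpartner).congr_of_eventuallyEq
      (hnear.mono fun t ht => recoil_of_lt hx ht.1 ht.2)
  have henergy : HasDerivAt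
      (fun t => sin (partner x t / 2) - sin (t / 2) - sin (recoil x t / 2)) 0 z :=
    (hasDerivAt_const z (-sin (x / 2))).congr_of_eventuallyEq
      (hnear.mono fun t ht => by linarith [energy_conservation hx ht.1 ht.2])
  have hunique := (((hpartner.div_const 2).sin.sub ((hasDerivAt_id z).div_const 2).sin).sub
    (hrecoil.div_const 2).sin).unique henergy
  have hpos := sub_pos.2 (cos_half_recoil_lt_cos_half_partner hx hxz hz)
  refine hpartner.congr_deriv ((eq_div_iff hpos.ne').2 ?_)
  simp only [id] at hunique
  linarith

lemma hasDerivAt_recoil (hx : 0 < x) (hxz : x < z) (hz : z < 2 * π) :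
    HasDerivAt (recoil x) ((cos (z / 2) - cos (partner x z / 2)) /
      (cos (partner x z / 2) - cos (recoil x z / 2))) z := by
  have hpos := sub_pos.2 (cos_half_recoil_lt_cos_half_partner hx hxz hz)
  have h := ((hasDerivAt_id z).const_sub (2 * π + x)).add (hasDerivAt_partner hx hxz hz)
  refine (h.congr_of_eventuallyEq ?_).congr_deriv ?_
  · filter_upwards [Ioo_mem_nhds hxz hz] with t ht using recoil_of_lt hx ht.1 ht.2
  · field_simp
    ring

end Ascending

/-! ### The change of variables to the collision surface -/

section Reflection

variable {x z : ℝ}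

lemma partner_reflect (hx : x ∈ Ioo 0 (2 * π)) (hz : z ∈ Ioo 0 (2 * π)) (hxz : x ≠ z) :
    partner (2 * π - x) (2 * π - z) = 2 * π - partner x z := by
  have ascending {x z : ℝ} (hx : 0 < x) (hxz : x < z) (hz : z < 2 * π) :
      partner (2 * π - x) (2 * π - z) = 2 * π - partner x z := by
    rw [partner, h0_reflect, mod2pi_neg (partner_mem_Ioo hx hxz hz).1, partner]
  rcases hxz.lt_or_gt with h | h
  · exact ascending hx.1 h hz.2
  · rw [eq_sub_iff_add_eq', ← eq_sub_iff_add_eq,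
      ← ascending (sub_pos.2 hx.2) (by linarith) (by linarith [hz.1]), sub_sub_cancel,
      sub_sub_cancel]

lemma recoil_reflect (hx : x ∈ Ioo 0 (2 * π)) (hz : z ∈ Ioo 0 (2 * π)) (hxz : x ≠ z) :
    recoil (2 * π - x) (2 * π - z) = 2 * π - recoil x z := by
  simpa only [partner_swap] using partner_reflect hz hx hxz.symm

lemma reflect_mem_Ioo (hx : x ∈ Ioo 0 (2 * π)) : 2 * π - x ∈ Ioo 0 (2 * π) :=
  ⟨by linarith [hx.2], by linarith [hx.1]⟩

lemma recoil_mem_of_gt (hx : x ∈ Ioo 0 (2 * π)) (hz : z ∈ Ioo 0 (2 * π)) (hzx : z < x) :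
    recoil x z ∈ Ioo 0 x := by
  have h := recoil_mem_Ioo (x := 2 * π - x) (z := 2 * π - z) (by linarith [hx.2]) (by linarith)
    (by linarith [hz.1])
  rw [recoil_reflect hx hz hzx.ne'] at h
  exact ⟨by linarith [h.2], by linarith [h.1]⟩

lemma partner_recoil (hx : x ∈ Ioo 0 (2 * π)) (hz : z ∈ Ioo 0 (2 * π)) (hxz : x ≠ z) :
    partner x (recoil x z) = partner x z := by
  rcases hxz.lt_or_gt with h | h
  · exact partner_recoil_of_lt hx.1 h hz.2
  · have hw := recoil_mem_of_gt hx hz h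
    rw [← sub_right_inj (a := 2 * π), ← partner_reflect hx ⟨hw.1, hw.2.trans hx.2⟩ hw.2.ne',
      ← partner_reflect hx hz hxz, ← recoil_reflect hx hz hxz]
    exact partner_recoil_of_lt (by linarith [hx.2]) (by linarith) (by linarith [hz.1])

end Reflection

lemma Fp_comm (x y : ℝ) : Fp x y = Fp y x := by unfold Fp; ring

lemma Fm_comm (x y : ℝ) : Fm x y = Fm y x := by unfold Fm; ring

lemma K2_comm (x y : ℝ) : K2 x y = K2 y x := by rw [K2, Fp_comm, K2]

lemma K1_comm (x y : ℝ) : K1 x y = K1 y x := by simp only [K1, Fm_comm]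

lemma Fp_reflect (x y : ℝ) : Fp (2 * π - x) (2 * π - y) = Fp x y := by
  simp only [Fp, sub_div, mul_div_cancel_left₀ π two_ne_zero, cos_pi_sub, sin_pi_sub]
  ring

lemma Fm_reflect (x y : ℝ) : Fm (2 * π - x) (2 * π - y) = Fm x y := by
  simp only [Fm, sub_div, mul_div_cancel_left₀ π two_ne_zero, cos_pi_sub, sin_pi_sub]
  ring

lemma K2_reflect (x y : ℝ) : K2 (2 * π - x) (2 * π - y) = K2 x y := by rw [K2, Fp_reflect, K2]

lemma K1_reflect (x y : ℝ) : K1 (2 * π - x) (2 * π - y) = K1 x y := by simp only [K1, Fm_reflect]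

lemma K1_nonneg (x y : ℝ) : 0 ≤ K1 x y := by unfold K1; split_ifs <;> positivity

lemma K2_nonneg (x y : ℝ) : 0 ≤ K2 x y := by unfold K2; positivity

lemma measurable_Fm : Measurable fun p : ℝ × ℝ => Fm p.1 p.2 := by unfold Fm; fun_prop

lemma measurable_K1 : Measurable fun p : ℝ × ℝ => K1 p.1 p.2 :=
  .ite (measurableSet_lt measurable_const measurable_Fm)
    (measurable_const.div measurable_Fm.sqrt) measurable_const

lemma measurable_K2 : Measurable fun p : ℝ × ℝ => K2 p.1 p.2 := by unfold K2 Fp; fun_prop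

section ChangeOfVariables

variable {x y z : ℝ}

lemma Fp_eq_sq (hx : 0 < x) (hxz : x < z) (hz : z < 2 * π) :
    Fp x z = (cos (partner x z / 2) - cos (recoil x z / 2)) ^ 2 := by
  have henergy := energy_conservation hx hxz hz
  have hmomentum : cos (partner x z / 2 - recoil x z / 2) = -cos (z / 2 - x / 2) := by
    rw [recoil_of_lt hx hxz hz, ← cos_sub_pi]
    ring_nf
  rw [cos_sub, cos_sub] at hmomentum
  have hsq : (sin (partner x z / 2) - sin (recoil x z / 2)) ^ 2
      = (sin (z / 2) - sin (x / 2)) ^ 2 := by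
    rw [show sin (partner x z / 2) - sin (recoil x z / 2) = sin (z / 2) - sin (x / 2) by linarith]
  rw [Fp]
  linarith [sin_sq_add_cos_sq (x / 2), sin_sq_add_cos_sq (z / 2),
    sin_sq_add_cos_sq (partner x z / 2), sin_sq_add_cos_sq (recoil x z / 2)]

lemma Fm_partner_eq_sq (hx : 0 < x) (hxz : x < z) (hz : z < 2 * π) :
    Fm x (partner x z) = (cos (recoil x z / 2) - cos (z / 2)) ^ 2 := by
  have hmomentum : cos (z / 2 + recoil x z / 2) = -cos (x / 2 + partner x z / 2) := by
    rw [recoil_of_lt hx hxz hz, ← cos_add_pi]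
    ring_nf
  rw [cos_add, cos_add] at hmomentum
  have hsq := congrArg (fun t : ℝ => t ^ 2) (energy_conservation hx hxz hz)
  rw [Fm]
  linarith [sin_sq_add_cos_sq (x / 2), sin_sq_add_cos_sq (z / 2),
    sin_sq_add_cos_sq (partner x z / 2), sin_sq_add_cos_sq (recoil x z / 2)]

lemma Fm_eq_four_mul (x y : ℝ) :
    Fm x y = 4 * (cos ((x + y) / 4) ^ 2 - (sin ((x + y) / 4) * cos ((x - y) / 4)) ^ 2) := by
  have hx : x / 2 = (x + y) / 4 + (x - y) / 4 := by ring
  have hy : y / 2 = (x + y) / 4 - (x - y) / 4 := by ring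
  rw [Fm, hx, hy, cos_add, cos_sub, sin_add, sin_sub]
  linear_combination 4 * cos ((x + y) / 4) ^ 2 * sin_sq_add_cos_sq ((x - y) / 4)

/- The outgoing pair is symmetric about `(x + y) / 2 + π`; conservation of energy determines the
half-distance `2δ` through `cos δ = tan ((x + y) / 4) * cos ((x - y) / 4)`. -/
lemma exists_partner_eq (hx : 0 < x) (hy : 0 < y) (hxy : x + y < 2 * π) (hF : 0 < Fm x y) :
    ∃ z ∈ Ioo x (2 * π), recoil x z < z ∧ partner x z = y := by
  set s := (x + y) / 4 with hs
  have hcos : 0 < cos s := cos_pos_of_mem_Ioo ⟨by linarith, by linarith⟩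
  have hsin : 0 < sin s := sin_pos_of_pos_of_lt_pi (by linarith) (by linarith)
  have hcos_lt : cos s < cos ((x - y) / 4) := by
    rw [← cos_abs ((x - y) / 4)]
    exact cos_lt_cos_of_nonneg_of_le_pi (abs_nonneg _) (by linarith)
      (abs_lt.2 ⟨by linarith, by linarith⟩)
  have hlt : tan s * cos ((x - y) / 4) < 1 := by
    rw [Fm_eq_four_mul] at hF
    rw [tan_eq_sin_div_cos, div_mul_eq_mul_div, div_lt_one hcos]
    exact lt_of_pow_lt_pow_left₀ 2 hcos.le (by linarith)
  have hgt : sin s < tan s * cos ((x - y) / 4) := by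
    rw [tan_eq_sin_div_cos, div_mul_eq_mul_div, lt_div_iff₀ hcos]
    exact mul_lt_mul_of_pos_left hcos_lt hsin
  set δ := arccos (tan s * cos ((x - y) / 4))
  have hδ : 0 < δ := arccos_pos.2 hlt
  have hcosδ : cos s * cos δ = sin s * cos ((x - y) / 4) := by
    rw [cos_arccos (by linarith) hlt.le, ← mul_assoc, mul_comm (cos s), tan_mul_cos hcos.ne']
  have hδ_lt : δ < π / 2 - s := by
    rw [← arccos_cos (by linarith : 0 ≤ π / 2 - s) (by linarith), cos_pi_div_two_sub]
    exact arccos_lt_arccos (neg_one_le_sin s) hgt hlt.le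
  obtain ⟨z, hz⟩ : ∃ z, z = 2 * (s + π / 2 + δ) := ⟨_, rfl⟩
  have hxz : x < z := by linarith
  have hz' : z < 2 * π := by linarith
  have hpartner : partner x z = y := by
    refine partner_eq_of_energy_conservation hx hxz hz'
      (abs_lt.2 ⟨by linarith, by linarith⟩) ?_
    rw [sin_add_sin, sin_add_sin, show (x / 2 + y / 2) / 2 = s by ring,
      show (z / 2 + (2 * π + x - z + y) / 2) / 2 = s + π / 2 by ring,
      show (z / 2 - (2 * π + x - z + y) / 2) / 2 = δ by rw [hz]; ring, sin_add_pi_div_two,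
      mul_assoc 2 (cos s), hcosδ]
    ring_nf
  refine ⟨z, ⟨hxz, hz'⟩, ?_, hpartner⟩
  rw [recoil_of_lt hx hxz hz', hpartner]
  linarith

lemma K2_eq_of_lt (hx : 0 < x) (hxz : x < z) (hz : z < 2 * π) :
    K2 x z = 2 / (cos (partner x z / 2) - cos (recoil x z / 2)) := by
  rw [K2, Fp_eq_sq hx hxz hz,
    sqrt_sq (sub_pos.2 (cos_half_recoil_lt_cos_half_partner hx hxz hz)).le]

lemma cos_half_lt_cos_half_recoil (hx : 0 < x) (hxz : x < z) (hz : z < 2 * π)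
    (hw : recoil x z < z) : cos (z / 2) < cos (recoil x z / 2) :=
  cos_lt_cos_of_nonneg_of_le_pi (by linarith [(recoil_mem_Ioo hx hxz hz).1]) (by linarith)
    (by linarith)

lemma K1_partner_eq (hx : 0 < x) (hxz : x < z) (hz : z < 2 * π) (hw : recoil x z < z) :
    K1 x (partner x z) = 4 / (cos (recoil x z / 2) - cos (z / 2)) := by
  have hpos := sub_pos.2 (cos_half_lt_cos_half_recoil hx hxz hz hw)
  rw [K1, Fm_partner_eq_sq hx hxz hz, if_pos (pow_pos hpos 2), sqrt_sq hpos.le]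

lemma strictAntiOn_recoil (hx : 0 < x) : StrictAntiOn (recoil x) (Ioo x (2 * π)) := by
  refine strictAntiOn_of_deriv_neg (convex_Ioo _ _) (fun z hz =>
    (hasDerivAt_recoil hx hz.1 hz.2).continuousAt.continuousWithinAt) fun z hz => ?_
  rw [interior_Ioo] at hz
  rw [(hasDerivAt_recoil hx hz.1 hz.2).deriv]
  exact div_neg_of_neg_of_pos (sub_neg.2 (cos_half_lt_cos_half_partner hx hz.1 hz.2))
    (sub_pos.2 (cos_half_recoil_lt_cos_half_partner hx hz.1 hz.2))

lemma image_recoil_Ioo (hx : 0 < x) : recoil x '' Ioo x (2 * π) = Ioo x (2 * π) := by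
  refine Subset.antisymm ?_ fun z hz =>
    ⟨recoil x z, recoil_mem_Ioo hx hz.1 hz.2, recoil_recoil_of_lt hx hz.1 hz.2⟩
  rintro _ ⟨z, hz, rfl⟩
  exact recoil_mem_Ioo hx hz.1 hz.2

lemma setLIntegral_Ioo_recoil (hx : 0 < x) (Φ : ℝ → ℝ≥0∞) :
    ∫⁻ z in Ioo x (2 * π), .ofReal (K2 x z) * Φ (recoil x z)
      = ∫⁻ z in Ioo x (2 * π), .ofReal (K2 x z) * Φ z := by
  have h := lintegral_image_eq_lintegral_deriv_mul_of_antitoneOn measurableSet_Ioo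
    (fun z hz => (hasDerivAt_recoil hx hz.1 hz.2).hasDerivWithinAt)
    (strictAntiOn_recoil hx).antitoneOn (fun z => .ofReal (K2 x z) * Φ z)
  rw [image_recoil_Ioo hx] at h
  rw [h]
  refine setLIntegral_congr_fun measurableSet_Ioo fun z hz => ?_
  have hw := recoil_mem_Ioo hx hz.1 hz.2
  have hjac : K2 x z = -((cos (z / 2) - cos (partner x z / 2)) /
      (cos (partner x z / 2) - cos (recoil x z / 2))) * K2 x (recoil x z) := by
    rw [K2_eq_of_lt hx hz.1 hz.2, K2_eq_of_lt hx hw.1 hw.2, partner_recoil_of_lt hx hz.1 hz.2,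
      recoil_recoil_of_lt hx hz.1 hz.2]
    have := sub_pos.2 (cos_half_lt_cos_half_partner hx hz.1 hz.2)
    field_simp
    ring
  rw [← mul_assoc, ← ENNReal.ofReal_mul' (K2_nonneg _ _), ← hjac]

lemma lintegral_eq_two_mul_setLIntegral_of_involution {α : Type*} [MeasurableSpace α]
    [TopologicalSpace α] [SecondCountableTopology α] [OpensMeasurableSpace α] [LinearOrder α]
    [OrderClosedTopology α] {m : Measure α} {σ : α → α} {F : α → ℝ≥0∞}
    (hσ : MeasurePreserving σ m m) (hF : Measurable F) (hinv : ∀ᵐ z ∂m, σ (σ z) = z)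
    (hFσ : ∀ᵐ z ∂m, F (σ z) = F z) (hfix : ∀ᵐ z ∂m, σ z ≠ z) :
    ∫⁻ z, F z ∂m = 2 * ∫⁻ z in {z | σ z < z}, F z ∂m := by
  have hS : MeasurableSet {z | σ z < z} := measurableSet_lt hσ.measurable measurable_id
  have hcompl : ∫⁻ z in {z | σ z < z}ᶜ, F z ∂m = ∫⁻ z in {z | σ z < z}, F z ∂m := by
    rw [← lintegral_indicator hS.compl, ← lintegral_indicator hS,
      ← hσ.lintegral_comp (hF.indicator hS)]
    refine lintegral_congr_ae ?_
    filter_upwards [hinv, hFσ, hfix] with z hz hFz hne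
    rcases hne.lt_or_gt with h | h <;> simp [indicator, hz, hFz, h, h.not_gt]
  rw [← lintegral_add_compl F hS, hcompl, two_mul]

lemma K1_eq_zero_of_Fm_nonpos (h : Fm x y ≤ 0) : K1 x y = 0 := if_neg h.not_gt

/-- The outgoing momenta `z > x` that exceed the momentum of the other outgoing phonon. -/
def leadingSet (x : ℝ) : Set ℝ := Ioo x (2 * π) ∩ {z | recoil x z < z}

lemma measurableSet_recoil_lt (x : ℝ) : MeasurableSet {z | recoil x z < z} :=
  measurableSet_lt (measurable_recoil.comp measurable_prodMk_left) measurable_id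

lemma measurableSet_leadingSet (x : ℝ) : MeasurableSet (leadingSet x) :=
  measurableSet_Ioo.inter (measurableSet_recoil_lt x)

lemma ordConnected_leadingSet (hx : 0 < x) : (leadingSet x).OrdConnected :=
  ⟨fun _ hz _ hz' t ht =>
    have ht' : t ∈ Ioo x (2 * π) := ⟨hz.1.1.trans_le ht.1, ht.2.trans_lt hz'.1.2⟩
    ⟨ht', ((strictAntiOn_recoil hx).antitoneOn hz.1 ht' ht.1).trans_lt (hz.2.trans_le ht.1)⟩⟩

lemma strictAntiOn_partner (hx : 0 < x) : StrictAntiOn (partner x) (leadingSet x) := by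
  refine strictAntiOn_of_deriv_neg (ordConnected_leadingSet hx).convex (fun z hz =>
    (hasDerivAt_partner hx hz.1.1 hz.1.2).continuousAt.continuousWithinAt) fun z hz => ?_
  obtain ⟨hz, hw⟩ := interior_subset hz
  rw [(hasDerivAt_partner hx hz.1 hz.2).deriv]
  exact div_neg_of_neg_of_pos (sub_neg.2 (cos_half_lt_cos_half_recoil hx hz.1 hz.2 hw))
    (sub_pos.2 (cos_half_recoil_lt_cos_half_partner hx hz.1 hz.2))

lemma image_partner_leadingSet (hx : 0 < x) :
    partner x '' leadingSet x = Ioo 0 (2 * π - x) ∩ {y | 0 < Fm x y} := by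
  refine Subset.antisymm ?_ ?_
  · rintro _ ⟨z, ⟨hz, hw⟩, rfl⟩
    have hy := partner_mem_Ioo hx hz.1 hz.2
    refine ⟨⟨hy.1, by linarith [hy.2, hz.2]⟩, ?_⟩
    rw [mem_ofPred_eq, Fm_partner_eq_sq hx hz.1 hz.2]
    exact pow_pos (sub_pos.2 (cos_half_lt_cos_half_recoil hx hz.1 hz.2 hw)) 2
  · rintro y ⟨hy, hF⟩
    obtain ⟨z, hz, hw, rfl⟩ := exists_partner_eq hx hy.1 (by linarith [hy.2]) hF
    exact ⟨z, ⟨hz, hw⟩, rfl⟩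

lemma setLIntegral_leadingSet_partner (hx : 0 < x) (Φ : ℝ → ℝ≥0∞) :
    ∫⁻ y in Ioo 0 (2 * π - x), .ofReal (K1 x y) * Φ y
      = 2 * ∫⁻ z in leadingSet x, .ofReal (K2 x z) * Φ (partner x z) := by
  have hsupport : ∫⁻ y in Ioo 0 (2 * π - x), .ofReal (K1 x y) * Φ y
      = ∫⁻ y in partner x '' leadingSet x, .ofReal (K1 x y) * Φ y := by
    have hF : MeasurableSet {y | 0 < Fm x y} :=
      measurableSet_lt measurable_const (by unfold Fm; fun_prop)
    rw [image_partner_leadingSet hx, inter_comm, ← setLIntegral_indicator hF, indicator_eq_self.2]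
    intro y hy
    by_contra hF
    exact hy (by simp [K1_eq_zero_of_Fm_nonpos (not_lt.1 hF)])
  have h := lintegral_image_eq_lintegral_deriv_mul_of_antitoneOn (measurableSet_leadingSet x)
    (fun z hz => (hasDerivAt_partner hx hz.1.1 hz.1.2).hasDerivWithinAt)
    (strictAntiOn_partner hx).antitoneOn (fun y => .ofReal (K1 x y) * Φ y)
  rw [hsupport, h, ← lintegral_const_mul' _ _ (by simp)]
  refine setLIntegral_congr_fun (measurableSet_leadingSet x) fun z ⟨hz, hw⟩ => ?_
  have hjac : -((cos (z / 2) - cos (recoil x z / 2)) /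
      (cos (partner x z / 2) - cos (recoil x z / 2))) * K1 x (partner x z) = 2 * K2 x z := by
    rw [K2_eq_of_lt hx hz.1 hz.2, K1_partner_eq hx hz.1 hz.2 hw]
    have := sub_pos.2 (cos_half_lt_cos_half_recoil hx hz.1 hz.2 hw)
    field_simp
    ring
  rw [← mul_assoc, ← ENNReal.ofReal_mul' (K1_nonneg _ _), hjac, ENNReal.ofReal_mul two_pos.le,
    ENNReal.ofReal_ofNat, mul_assoc]

lemma measurePreserving_recoil_withDensity (hx : 0 < x) :
    MeasurePreserving (recoil x)
      ((volume.restrict (Ioo x (2 * π))).withDensity fun z => .ofReal (K2 x z))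
      ((volume.restrict (Ioo x (2 * π))).withDensity fun z => .ofReal (K2 x z)) := by
  have hrecoil : Measurable (recoil x) := measurable_recoil.comp measurable_prodMk_left
  have hK2 : Measurable fun z => ENNReal.ofReal (K2 x z) :=
    (measurable_K2.comp measurable_prodMk_left).ennreal_ofReal
  refine ⟨hrecoil, Measure.ext_of_lintegral _ fun Φ hΦ => ?_⟩
  rw [lintegral_map hΦ hrecoil, lintegral_withDensity_eq_lintegral_mul _ hK2 hΦ]
  exact (lintegral_withDensity_eq_lintegral_mul _ hK2 (hΦ.comp hrecoil)).trans
    (setLIntegral_Ioo_recoil hx Φ)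

lemma ae_recoil_ne (hx : 0 < x) : ∀ᵐ z ∂volume.restrict (Ioo x (2 * π)), recoil x z ≠ z := by
  have hfixed : (Ioo x (2 * π) ∩ {z | recoil x z = z}).Subsingleton := by
    rintro z ⟨hz, hfix⟩ z' ⟨hz', hfix'⟩
    rcases lt_trichotomy z z' with h | h | h
    · exact absurd (strictAntiOn_recoil hx hz hz' h) (by rw [hfix, hfix']; exact h.not_gt)
    · exact h
    · exact absurd (strictAntiOn_recoil hx hz' hz h) (by rw [hfix, hfix']; exact h.not_gt)
  refine (ae_restrict_iff' measurableSet_Ioo).2 ?_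
  filter_upwards [measure_eq_zero_iff_ae_notMem.1 (hfixed.measure_zero volume)] with z hz hmem hfix
  exact hz ⟨hmem, hfix⟩

lemma setLIntegral_Ioo_partner (hx : 0 < x) {Φ : ℝ → ℝ≥0∞} (hΦ : Measurable Φ) :
    ∫⁻ z in Ioo x (2 * π), .ofReal (K2 x z) * Φ (partner x z)
      = ∫⁻ y in Ioo 0 (2 * π - x), .ofReal (K1 x y) * Φ y := by
  have hK2 : Measurable fun z => ENNReal.ofReal (K2 x z) :=
    (measurable_K2.comp measurable_prodMk_left).ennreal_ofReal
  have hF : Measurable fun z => Φ (partner x z) :=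
    hΦ.comp (measurable_partner.comp measurable_prodMk_left)
  have hac := withDensity_absolutelyContinuous (volume.restrict (Ioo x (2 * π)))
    fun z => ENNReal.ofReal (K2 x z)
  have hmem : ∀ᵐ z ∂volume.restrict (Ioo x (2 * π)), z ∈ Ioo x (2 * π) :=
    ae_restrict_mem measurableSet_Ioo
  have h := lintegral_eq_two_mul_setLIntegral_of_involution
    (measurePreserving_recoil_withDensity hx) hF
    (hac.ae_le (hmem.mono fun z hz => recoil_recoil_of_lt hx hz.1 hz.2))
    (hac.ae_le (hmem.mono fun z hz => by rw [partner_recoil_of_lt hx hz.1 hz.2]))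
    (hac.ae_le (ae_recoil_ne hx))
  rw [restrict_withDensity (measurableSet_recoil_lt x),
    lintegral_withDensity_eq_lintegral_mul _ hK2 hF,
    lintegral_withDensity_eq_lintegral_mul _ hK2 hF,
    Measure.restrict_restrict (measurableSet_recoil_lt x), inter_comm] at h
  rw [setLIntegral_leadingSet_partner hx]
  exact h

end ChangeOfVariables

section FullCell

variable {x : ℝ}

lemma lintegral_muI_eq_add (F : ℝ → ℝ≥0∞) (hx : x ∈ Ioo 0 (2 * π)) :
    ∫⁻ z, F z ∂muI = (∫⁻ z in Ioo x (2 * π), F z) + ∫⁻ z in Ioo 0 x, F z := by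
  rw [muI, II, ← Ico_union_Ico_eq_Ico hx.1.le hx.2.le,
    lintegral_union measurableSet_Ico (Ico_disjoint_Ico_same), add_comm,
    setLIntegral_congr Ioo_ae_eq_Ico.symm, setLIntegral_congr Ioo_ae_eq_Ico.symm]

lemma setLIntegral_Ioo_reflect (a b : ℝ) (F : ℝ → ℝ≥0∞) :
    ∫⁻ z in Ioo a b, F z = ∫⁻ z in Ioo (2 * π - b) (2 * π - a), F (2 * π - z) := by
  have h := (Measure.measurePreserving_sub_left volume (2 * π)).setLIntegral_comp_preimage_emb
    (Homeomorph.subLeft (2 * π)).measurableEmbedding F (Ioo a b)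
  rw [← h, preimage_const_sub_Ioo]

lemma lintegral_K2_mul_comp_recoil (hx : x ∈ Ioo 0 (2 * π)) (Φ : ℝ → ℝ≥0∞) :
    ∫⁻ z, .ofReal (K2 x z) * Φ (recoil x z) ∂muI = ∫⁻ z, .ofReal (K2 x z) * Φ z ∂muI := by
  rw [lintegral_muI_eq_add _ hx, lintegral_muI_eq_add _ hx, setLIntegral_Ioo_recoil hx.1]
  congr 1
  have hreflect := setLIntegral_Ioo_recoil (sub_pos.2 hx.2) fun z => Φ (2 * π - z)
  rw [setLIntegral_Ioo_reflect, setLIntegral_Ioo_reflect 0 x, sub_zero]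
  simp_rw [← K2_reflect x, sub_sub_cancel]
  rw [← hreflect]
  refine setLIntegral_congr_fun measurableSet_Ioo fun z hz => ?_
  have hz' : z ∈ Ioo 0 (2 * π) := ⟨(sub_pos.2 hx.2).trans hz.1, hz.2⟩
  rw [← recoil_reflect (reflect_mem_Ioo hx) hz' hz.1.ne, sub_sub_cancel]

lemma lintegral_K2_mul_comp_partner (hx : x ∈ Ioo 0 (2 * π)) {Φ : ℝ → ℝ≥0∞}
    (hΦ : Measurable Φ) :
    ∫⁻ z, .ofReal (K2 x z) * Φ (partner x z) ∂muI = ∫⁻ y, .ofReal (K1 x y) * Φ y ∂muI := by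
  rw [lintegral_muI_eq_add _ hx, setLIntegral_Ioo_partner hx.1 hΦ,
    lintegral_muI_eq_add (x := 2 * π - x) _ (reflect_mem_Ioo hx), add_comm]
  congr 1
  have hreflect := setLIntegral_Ioo_partner (Φ := fun y => Φ (2 * π - y)) (sub_pos.2 hx.2)
    (hΦ.comp (measurable_const.sub measurable_id))
  rw [setLIntegral_Ioo_reflect 0 x,
    setLIntegral_Ioo_reflect (2 * π - x) (2 * π) (fun y => .ofReal (K1 x y) * Φ y), sub_zero,
    sub_self]
  simp_rw [← K2_reflect x, ← K1_reflect x, sub_sub_cancel]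
  rw [sub_sub_cancel] at hreflect
  rw [← hreflect]
  refine setLIntegral_congr_fun measurableSet_Ioo fun z hz => ?_
  have hz' : z ∈ Ioo 0 (2 * π) := ⟨(sub_pos.2 hx.2).trans hz.1, hz.2⟩
  rw [← partner_reflect (reflect_mem_Ioo hx) hz' hz.1.ne, sub_sub_cancel]

end FullCell

/-! ### Bounds on the kernels -/

lemma cos_half_reflect (x : ℝ) : cos ((2 * π - x) / 2) = -cos (x / 2) := by
  rw [sub_div, mul_div_cancel_left₀ π two_ne_zero, cos_pi_sub]

lemma sin_half_reflect (x : ℝ) : sin ((2 * π - x) / 2) = sin (x / 2) := by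
  rw [sub_div, mul_div_cancel_left₀ π two_ne_zero, sin_pi_sub]

lemma muI_eq_restrict_Ioo : muI = volume.restrict (Ioo 0 (2 * π)) :=
  Measure.restrict_congr_set Ioo_ae_eq_Ico.symm

lemma ae_muI_mem_Ioo : ∀ᵐ x ∂muI, x ∈ Ioo 0 (2 * π) := by
  rw [muI_eq_restrict_Ioo]
  exact ae_restrict_mem measurableSet_Ioo

lemma measurePreserving_reflect : MeasurePreserving (fun x => 2 * π - x) muI muI := by
  have h := (Measure.measurePreserving_sub_left volume (2 * π)).restrict_preimage
    (s := Ioo 0 (2 * π)) measurableSet_Ioo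
  rwa [preimage_const_sub_Ioo, sub_self, sub_zero, ← muI_eq_restrict_Ioo] at h

lemma VV_reflect (x : ℝ) : VV (2 * π - x) = VV x := by
  have h := measurePreserving_reflect.integral_comp
    (Homeomorph.subLeft (2 * π)).measurableEmbedding (K2 (2 * π - x))
  simp_rw [K2_reflect] at h
  exact h.symm

lemma VV_nonneg (x : ℝ) : 0 ≤ VV x := integral_nonneg (K2_nonneg x)

lemma lintegral_sin_half_rpow_lt_top {s : ℝ} (hs0 : 0 ≤ s) (hs : s < 1) :
    ∫⁻ y, .ofReal (sin (y / 2) ^ (-s)) ∂muI < ∞ := by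
  have half : ∫⁻ y in Ioo 0 π, .ofReal (sin (y / 2) ^ (-s)) < ∞ := by
    have hInt : IntegrableOn (fun y : ℝ => y ^ (-s)) (Ioo 0 π) :=
      (intervalIntegrable_iff_integrableOn_Ioo_of_le pi_pos.le).1
        (intervalIntegral.intervalIntegrable_rpow' (by linarith))
    refine lt_of_le_of_lt (setLIntegral_mono' measurableSet_Ioo fun y hy => ?_)
      (hInt.const_mul (π ^ s)).lintegral_lt_top
    have hjordan : y / π ≤ sin (y / 2) := by
      refine le_of_eq_of_le ?_ (mul_le_sin (by linarith [hy.1]) (by linarith [hy.2]))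
      field_simp
    refine ENNReal.ofReal_le_ofReal ?_
    calc sin (y / 2) ^ (-s) ≤ (y / π) ^ (-s) :=
          rpow_le_rpow_of_nonpos (div_pos hy.1 pi_pos) hjordan (by linarith)
      _ = π ^ s * y ^ (-s) := by
          rw [div_rpow hy.1.le pi_pos.le, rpow_neg pi_pos.le, div_inv_eq_mul, mul_comm]
  rw [lintegral_muI_eq_add _ (⟨pi_pos, by linarith [pi_pos]⟩ : π ∈ Ioo 0 (2 * π)),
    setLIntegral_Ioo_reflect]
  simp_rw [sin_half_reflect, sub_self, two_mul, add_sub_cancel_right]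
  exact ENNReal.add_lt_top.2 ⟨half, half⟩

section Bounds

variable {x y : ℝ}

lemma sin_half_pos (hx : x ∈ Ioo 0 (2 * π)) : 0 < sin (x / 2) :=
  sin_pos_of_pos_of_lt_pi (by linarith [hx.1]) (by linarith [hx.2])

lemma four_mul_sin_mul_sin_le_Fp (x y : ℝ) : 4 * (sin (x / 2) * sin (y / 2)) ≤ Fp x y := by
  rw [Fp]
  linarith [sq_nonneg (cos (x / 2) + cos (y / 2))]

lemma Fp_pos (hx : x ∈ Ioo 0 (2 * π)) (hy : y ∈ Ioo 0 (2 * π)) : 0 < Fp x y :=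
  lt_of_lt_of_le (mul_pos four_pos (mul_pos (sin_half_pos hx) (sin_half_pos hy)))
    (four_mul_sin_mul_sin_le_Fp x y)

lemma div_sqrt_le_rpow {a b c d F : ℝ} (ha : 0 < a) (hb : 0 < b) (hc : 0 < c) (hd : 0 ≤ d)
    (hF : c ^ 2 * (a * b) ≤ F) :
    d / √F ≤ d / c * (a ^ (-(1 / 2) : ℝ) * b ^ (-(1 / 2) : ℝ)) := by
  have hab : 0 < a * b := mul_pos ha hb
  rw [← mul_rpow ha.le hb.le, rpow_neg hab.le, ← sqrt_eq_rpow, ← div_eq_mul_inv, div_div]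
  gcongr
  rw [← sqrt_sq hc.le, ← sqrt_mul (sq_nonneg c)]
  exact sqrt_le_sqrt hF

lemma K2_le (hx : x ∈ Ioo 0 (2 * π)) (hy : y ∈ Ioo 0 (2 * π)) :
    K2 x y ≤ sin (x / 2) ^ (-(1 / 2) : ℝ) * sin (y / 2) ^ (-(1 / 2) : ℝ) := by
  have hF : 2 ^ 2 * (sin (x / 2) * sin (y / 2)) ≤ Fp x y := by
    linarith [four_mul_sin_mul_sin_le_Fp x y]
  simpa [K2] using
    div_sqrt_le_rpow (sin_half_pos hx) (sin_half_pos hy) two_pos zero_le_two hF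

lemma lintegral_K2_le (hx : x ∈ Ioo 0 (2 * π)) :
    ∫⁻ y, .ofReal (K2 x y) ∂muI ≤ .ofReal (sin (x / 2) ^ (-(1 / 2) : ℝ)) *
      ∫⁻ y, .ofReal (sin (y / 2) ^ (-(1 / 2) : ℝ)) ∂muI := by
  rw [← lintegral_const_mul' _ _ ENNReal.ofReal_ne_top]
  refine lintegral_mono_ae ?_
  filter_upwards [ae_muI_mem_Ioo] with y hy
  rw [← ENNReal.ofReal_mul (rpow_nonneg (sin_half_pos hx).le _)]
  exact ENNReal.ofReal_le_ofReal (K2_le hx hy)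

lemma lintegral_K2 (hx : x ∈ Ioo 0 (2 * π)) :
    ∫⁻ y, .ofReal (K2 x y) ∂muI = .ofReal (VV x) := by
  refine (ofReal_integral_eq_lintegral_ofReal ⟨?_, ?_⟩ (.of_forall (K2_nonneg x))).symm
  · exact (measurable_K2.comp measurable_prodMk_left).aestronglyMeasurable
  · rw [hasFiniteIntegral_iff_ofReal (.of_forall (K2_nonneg x))]
    exact (lintegral_K2_le hx).trans_lt (ENNReal.mul_lt_top ENNReal.ofReal_lt_top
      (lintegral_sin_half_rpow_lt_top (by norm_num) (by norm_num)))

lemma exists_VV_le :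
    ∃ C, 0 ≤ C ∧ ∀ x ∈ Ioo 0 (2 * π), VV x ≤ sin (x / 2) ^ (-(1 / 2) : ℝ) * C := by
  refine ⟨(∫⁻ y, .ofReal (sin (y / 2) ^ (-(1 / 2) : ℝ)) ∂muI).toReal,
    ENNReal.toReal_nonneg, fun x hx => ?_⟩
  have h := lintegral_K2_le hx
  rw [lintegral_K2 hx] at h
  have hfin := lintegral_sin_half_rpow_lt_top (s := 1 / 2) (by norm_num) (by norm_num)
  have h' := ENNReal.toReal_mono (ENNReal.mul_ne_top ENNReal.ofReal_ne_top hfin.ne) h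
  rwa [ENNReal.toReal_ofReal (VV_nonneg x), ENNReal.toReal_mul,
    ENNReal.toReal_ofReal (rpow_nonneg (sin_half_pos hx).le _)] at h'

end Bounds

section LowerBound

variable {x r t : ℝ}

lemma Fp_reflect_two_mul_le (hx : 0 < x) (hx' : x ≤ π) (hr : r ≤ 1)
    (hrx : r ^ 3 = sin (x / 2)) (ht : 0 < t) (htr : t < r) :
    Fp x (2 * π - 2 * t) ≤ (3 * r ^ 2) ^ 2 := by
  have hr0 : 0 < r := ht.trans htr
  have hcosx : 0 ≤ cos (x / 2) := cos_nonneg_of_mem_Icc ⟨by linarith, by linarith⟩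
  have hcost : 0 ≤ cos t := cos_nonneg_of_mem_Icc ⟨by linarith, by linarith [pi_gt_three]⟩
  have hsint : 0 ≤ sin t := sin_nonneg_of_nonneg_of_le_pi ht.le (by linarith [pi_gt_three])
  have hsint_le : sin t ≤ r := (sin_le ht.le).trans htr.le
  have hsinx_le : sin (x / 2) ≤ r := hrx ▸ pow_le_of_le_one hr0.le hr three_ne_zero
  have hcosx_ge : 1 - cos (x / 2) ≤ r ^ 2 := by
    nlinarith [sin_sq_add_cos_sq (x / 2), cos_le_one (x / 2), pow_pos hr0 3]
  have hcost_ge : 1 - cos t ≤ r ^ 2 := by nlinarith [sin_sq_add_cos_sq t, cos_le_one t]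
  have hcos : (cos (x / 2) - cos t) ^ 2 ≤ (r ^ 2) ^ 2 :=
    sq_le_sq' (by linarith [cos_le_one t]) (by linarith [cos_le_one (x / 2)])
  have hsin : sin (x / 2) * sin t ≤ r ^ 3 * r := by
    rw [hrx]
    exact mul_le_mul_of_nonneg_left hsint_le (hrx ▸ (pow_pos hr0 3).le)
  rw [Fp, cos_half_reflect, sin_half_reflect, mul_div_cancel_left₀ t two_ne_zero]
  nlinarith [sq_nonneg (r ^ 2)]

lemma le_K2_of_mem_Ioo (hx : 0 < x) (hx' : x ≤ π) (hr0 : 0 < r) (hr : r ≤ 1)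
    (hrx : r ^ 3 = sin (x / 2)) {y : ℝ} (hy : y ∈ Ioo (2 * π - 2 * r) (2 * π)) :
    2 / (3 * r ^ 2) ≤ K2 x y := by
  obtain ⟨t, rfl⟩ : ∃ t, y = 2 * π - 2 * t := ⟨(2 * π - y) / 2, by ring⟩
  have hF := Fp_reflect_two_mul_le (t := t) hx hx' hr hrx (by linarith [hy.2])
    (by linarith [hy.1])
  rw [K2]
  refine div_le_div_of_nonneg_left two_pos.le (sqrt_pos.2 (Fp_pos ⟨hx, ?_⟩ ⟨?_, hy.2⟩))
    (sqrt_le_iff.2 ⟨by positivity, hF⟩)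
  · linarith [pi_pos]
  · linarith [hy.1, pi_gt_three]

lemma one_le_VV_mul_of_le_pi (hx : 0 < x) (hx' : x ≤ π) :
    1 ≤ VV x * sin (x / 2) ^ (1 / 3 : ℝ) := by
  have hxI : x ∈ Ioo 0 (2 * π) := ⟨hx, by linarith [pi_pos]⟩
  have hsin := sin_half_pos hxI
  set r := sin (x / 2) ^ (1 / 3 : ℝ) with hr
  have hr0 : 0 < r := rpow_pos_of_pos hsin _
  have hr1 : r ≤ 1 := rpow_le_one hsin.le (sin_le_one _) (by norm_num)
  have hrx : r ^ 3 = sin (x / 2) := by rw [hr, ← rpow_natCast, ← rpow_mul hsin.le]; norm_num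
  have hsub : Ioo (2 * π - 2 * r) (2 * π) ⊆ II := fun y hy =>
    ⟨by linarith [hy.1, pi_gt_three], hy.2⟩
  have hV : ENNReal.ofReal (2 / (3 * r ^ 2)) * .ofReal (2 * r) ≤ .ofReal (VV x) := by
    rw [← lintegral_K2 hxI]
    calc ENNReal.ofReal (2 / (3 * r ^ 2)) * .ofReal (2 * r)
        = ∫⁻ _ in Ioo (2 * π - 2 * r) (2 * π), .ofReal (2 / (3 * r ^ 2)) := by
          rw [setLIntegral_const, volume_Ioo, sub_sub_cancel]
      _ ≤ ∫⁻ y in Ioo (2 * π - 2 * r) (2 * π), .ofReal (K2 x y) :=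
          setLIntegral_mono' measurableSet_Ioo fun y hy =>
            ENNReal.ofReal_le_ofReal (le_K2_of_mem_Ioo hx hx' hr0 hr1 hrx hy)
      _ ≤ ∫⁻ y, .ofReal (K2 x y) ∂muI := lintegral_mono_set hsub
  rw [← ENNReal.ofReal_mul (by positivity), ENNReal.ofReal_le_ofReal_iff (VV_nonneg x)] at hV
  calc (1 : ℝ) ≤ 2 / (3 * r ^ 2) * (2 * r) * r := by field_simp; norm_num
    _ ≤ VV x * r := mul_le_mul_of_nonneg_right hV hr0.le

lemma one_le_VV_mul_sin_half_rpow (hx : x ∈ Ioo 0 (2 * π)) :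
    1 ≤ VV x * sin (x / 2) ^ (1 / 3 : ℝ) := by
  rcases le_total x π with h | h
  · exact one_le_VV_mul_of_le_pi hx.1 h
  · simpa only [VV_reflect, sin_half_reflect] using
      one_le_VV_mul_of_le_pi (sub_pos.2 hx.2) (by linarith)

lemma VV_pos (hx : x ∈ Ioo 0 (2 * π)) : 0 < VV x :=
  pos_of_mul_pos_left (one_pos.trans_le (one_le_VV_mul_sin_half_rpow hx))
    (rpow_nonneg (sin_half_pos hx).le _)

end LowerBound

/-! ### The singularity of `K₁` -/

/-- The ratio `ρ(x,y) = (cos(x/2) + cos(y/2))² / (sin(x/2) sin(y/2))`. Since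
`F₋ = (ρ - 4) sin(x/2) sin(y/2)`, the kernel `K₁` lives on `ρ > 4` and blows up along `ρ = 4`. -/
def cosSinRatio (x y : ℝ) : ℝ := (cos (x / 2) + cos (y / 2)) ^ 2 / (sin (x / 2) * sin (y / 2))

/-- The part of the support of `K₁` close to its singularity, on which `4 < ρ < 4 + ε`. -/
def nearSingular (ε : ℝ) : Set (ℝ × ℝ) := {p | cosSinRatio p.1 p.2 ∈ Ioo 4 (4 + ε)}

lemma measurableSet_nearSingular (ε : ℝ) : MeasurableSet (nearSingular ε) := by
  have hratio : Measurable fun p : ℝ × ℝ => cosSinRatio p.1 p.2 := by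
    unfold cosSinRatio
    fun_prop
  exact hratio measurableSet_Ioo

lemma cosSinRatio_reflect (x y : ℝ) :
    cosSinRatio (2 * π - x) (2 * π - y) = cosSinRatio x y := by
  simp only [cosSinRatio, cos_half_reflect, sin_half_reflect, ← neg_add, neg_sq]

section Singularity

variable {x y ε : ℝ}

lemma Fm_eq_cosSinRatio_sub_mul (hx : x ∈ Ioo 0 (2 * π)) (hy : y ∈ Ioo 0 (2 * π)) :
    Fm x y = (cosSinRatio x y - 4) * (sin (x / 2) * sin (y / 2)) := by
  have hpx := sin_half_pos hx
  have hpy := sin_half_pos hy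
  rw [Fm, cosSinRatio]
  field_simp

lemma K1_eq_of_lt_cosSinRatio (hx : x ∈ Ioo 0 (2 * π)) (hy : y ∈ Ioo 0 (2 * π))
    (hρ : 4 < cosSinRatio x y) :
    K1 x y = 4 / (√(cosSinRatio x y - 4) * √(sin (x / 2) * sin (y / 2))) := by
  have hpos := mul_pos (sub_pos.2 hρ) (mul_pos (sin_half_pos hx) (sin_half_pos hy))
  rw [K1, Fm_eq_cosSinRatio_sub_mul hx hy, if_pos hpos, sqrt_mul (sub_pos.2 hρ).le]

lemma hasDerivAt_cosSinRatio (hx : x ∈ Ioo 0 (2 * π)) (hy : y ∈ Ioo 0 (2 * π)) :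
    HasDerivAt (cosSinRatio x)
      (-((cos (x / 2) + cos (y / 2)) * (1 + sin (y / 2) ^ 2 + cos (x / 2) * cos (y / 2)) /
        (2 * sin (x / 2) * sin (y / 2) ^ 2))) y := by
  have hpx := sin_half_pos hx
  have hpy := sin_half_pos hy
  have hhalf : HasDerivAt (fun z : ℝ => z / 2) (1 / 2) y := (hasDerivAt_id y).div_const 2
  refine ((((hhalf.cos.const_add (cos (x / 2))).fun_pow 2).fun_div
    (hhalf.sin.const_mul (sin (x / 2))) (by positivity))).congr_deriv ?_
  field_simp
  linear_combination (-(cos (x / 2) + cos (y / 2))) * sin_sq_add_cos_sq (y / 2)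

lemma cos_half_add_cos_half_pos (hx : 0 < x) (hy : y ∈ Ioo 0 (2 * π - x)) :
    0 < cos (x / 2) + cos (y / 2) := by
  have h := cos_lt_cos_of_nonneg_of_le_pi (x := y / 2) (y := π - x / 2) (by linarith [hy.1])
    (by linarith) (by linarith [hy.2])
  rw [cos_pi_sub] at h
  linarith

lemma half_sin_sq_add_sin_sq_le (a b : ℝ) :
    (sin a ^ 2 + sin b ^ 2) / 2 ≤ 1 + sin b ^ 2 + cos a * cos b := by
  nlinarith [sq_nonneg (cos a + cos b), sin_sq_add_cos_sq a, sin_sq_add_cos_sq b]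

lemma deriv_cosSinRatio_neg (hx : x ∈ Ioo 0 (2 * π)) (hy : y ∈ Ioo 0 (2 * π - x)) :
    deriv (cosSinRatio x) y < 0 := by
  have hy' : y ∈ Ioo 0 (2 * π) := ⟨hy.1, by linarith [hy.2, hx.1]⟩
  have hpx := sin_half_pos hx
  have hpy := sin_half_pos hy'
  have hcos := cos_half_add_cos_half_pos hx.1 hy
  have hfactor : 0 < 1 + sin (y / 2) ^ 2 + cos (x / 2) * cos (y / 2) :=
    lt_of_lt_of_le (by positivity) (half_sin_sq_add_sin_sq_le (x / 2) (y / 2))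
  rw [(hasDerivAt_cosSinRatio hx hy').deriv, neg_lt_zero]
  positivity

lemma strictAntiOn_cosSinRatio (hx : x ∈ Ioo 0 (2 * π)) :
    StrictAntiOn (cosSinRatio x) (Ioo 0 (2 * π - x)) := by
  refine strictAntiOn_of_deriv_neg (convex_Ioo _ _) (fun y hy => ?_) fun y hy => ?_
  · exact (hasDerivAt_cosSinRatio hx
      ⟨hy.1, by linarith [hy.2, hx.1]⟩).continuousAt.continuousWithinAt
  · exact deriv_cosSinRatio_neg hx (interior_subset hy)

lemma le_pow_three_of_mul_le_sq_sub {a b : ℝ} (ha : 0 < a) (hab : a ≤ b)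
    (h : a * b ≤ (b ^ 2 - a ^ 2) ^ 2) : a ≤ b ^ 3 := by
  have hb : 0 < b := ha.trans_le hab
  refine le_of_mul_le_mul_right ?_ hb
  calc a * b ≤ (b ^ 2 - a ^ 2) ^ 2 := h
    _ ≤ (b ^ 2) ^ 2 := pow_le_pow_left₀ (sub_nonneg.2 (pow_le_pow_left₀ ha.le hab 2))
        (sub_le_self _ (sq_nonneg a)) 2
    _ = b ^ 3 * b := by ring

-- Unless `p` or `q` is bounded below, `(u - v)² ≥ 1`, so the lower bound on `(u + v)²` gives
-- `4 p q ≤ (u² - v²)² = (q² - p²)²`: the smaller of `p` and `q` is at most the cube of the other.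
lemma mul_le_of_sq_add_mem_Icc {p q u v r : ℝ} (hr : 0 < r) (hr1 : r ≤ 1) (hrp : r ^ 3 = p)
    (hq : 0 < q) (hu : p ^ 2 + u ^ 2 = 1) (hv : q ^ 2 + v ^ 2 = 1)
    (huv : (u + v) ^ 2 ∈ Icc (4 * (p * q)) (5 * (p * q))) :
    q * r ≤ 100 * (p ^ 2 + q ^ 2) := by
  have hp : 0 < p := hrp ▸ pow_pos hr 3
  have hq1 : q ≤ 1 := by nlinarith [sq_nonneg v]
  have hqr : q * r ≤ 1 := mul_le_one₀ hq1 hr.le hr1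
  rcases le_or_gt (1 / 10) p with hp_large | hp_small
  · nlinarith
  rcases le_or_gt (1 / 10) q with hq_large | hq_small
  · nlinarith
  have hpq : 0 < p * q := mul_pos hp hq
  have hdiff : 1 ≤ (u - v) ^ 2 := by nlinarith [huv.2]
  have hresonant : p * q ≤ (q ^ 2 - p ^ 2) ^ 2 := by
    have hfactor : q ^ 2 - p ^ 2 = (u - v) * (u + v) := by linear_combination hv - hu
    rw [hfactor, mul_pow]
    nlinarith [huv.1]
  rcases le_total p q with hle | hle
  · have hcube : r ^ 3 ≤ q ^ 3 := hrp ▸ le_pow_three_of_mul_le_sq_sub hp hle hresonant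
    nlinarith [le_of_pow_le_pow_left₀ three_ne_zero hq.le hcube]
  · have hcube : q ≤ p ^ 3 :=
      le_pow_three_of_mul_le_sq_sub hq hle (by rw [mul_comm, ← neg_sq]; simpa using hresonant)
    nlinarith [pow_le_pow_of_le_one hp.le (by linarith) (show 2 ≤ 3 by norm_num)]

lemma sin_half_le_VV_mul (hx : x ∈ Ioo 0 (2 * π)) (hy : y ∈ Ioo 0 (2 * π))
    (hρ : cosSinRatio x y ∈ Icc 4 5) :
    sin (y / 2) ≤ 100 * VV x * (sin (x / 2) ^ 2 + sin (y / 2) ^ 2) := by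
  have hpx := sin_half_pos hx
  have hpy := sin_half_pos hy
  set r := sin (x / 2) ^ (1 / 3 : ℝ) with hr
  have hrp : r ^ 3 = sin (x / 2) := by rw [hr, ← rpow_natCast, ← rpow_mul hpx.le]; norm_num
  have hr1 : r ≤ 1 := rpow_le_one hpx.le (sin_le_one _) (by norm_num)
  rw [cosSinRatio, mem_Icc, le_div_iff₀ (by positivity), div_le_iff₀ (by positivity)] at hρ
  calc sin (y / 2) ≤ sin (y / 2) * (VV x * r) :=
        le_mul_of_one_le_right hpy.le (one_le_VV_mul_sin_half_rpow hx)
    _ = VV x * (sin (y / 2) * r) := by ring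
    _ ≤ VV x * (100 * (sin (x / 2) ^ 2 + sin (y / 2) ^ 2)) :=
        mul_le_mul_of_nonneg_left (mul_le_of_sq_add_mem_Icc (rpow_pos_of_pos hpx _) hr1 hrp hpy
          (sin_sq_add_cos_sq _) (sin_sq_add_cos_sq _) hρ) (VV_nonneg x)
    _ = 100 * VV x * (sin (x / 2) ^ 2 + sin (y / 2) ^ 2) := by ring

lemma div_sqrt_sin_mul_sin_le (hx : x ∈ Ioo 0 (2 * π)) (hy : y ∈ Ioo 0 (2 * π - x))
    (hρ : cosSinRatio x y ∈ Icc 4 5) :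
    8 / √(sin (x / 2) * sin (y / 2)) ≤ 1600 * VV x * -deriv (cosSinRatio x) y := by
  have hy' : y ∈ Ioo 0 (2 * π) := ⟨hy.1, by linarith [hy.2, hx.1]⟩
  have hcos := cos_half_add_cos_half_pos hx.1 hy
  have hsin := sin_half_le_VV_mul hx hy' hρ
  have hfactor := half_sin_sq_add_sin_sq_le (x / 2) (y / 2)
  have hpx := sin_half_pos hx
  have hpy := sin_half_pos hy'
  have hV := VV_pos hx
  rw [(hasDerivAt_cosSinRatio hx hy').deriv, neg_neg]
  have hsqrt : 2 * √(sin (x / 2) * sin (y / 2)) ≤ cos (x / 2) + cos (y / 2) := by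
    refine le_of_sq_le_sq ?_ hcos.le
    rw [mul_pow, sq_sqrt (by positivity)]
    linarith [(le_div_iff₀ (mul_pos hpx hpy)).1 hρ.1]
  have hm2 : √(sin (x / 2) * sin (y / 2)) ^ 2 = sin (x / 2) * sin (y / 2) :=
    sq_sqrt (mul_pos hpx hpy).le
  have hm : 0 < √(sin (x / 2) * sin (y / 2)) := sqrt_pos.2 (mul_pos hpx hpy)
  set m := √(sin (x / 2) * sin (y / 2))
  calc 8 / m = 8 * sin (y / 2) * m / (sin (x / 2) * sin (y / 2) ^ 2) := by
        field_simp
        linarith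
    _ ≤ 8 * (100 * VV x * (sin (x / 2) ^ 2 + sin (y / 2) ^ 2)) * m /
          (sin (x / 2) * sin (y / 2) ^ 2) := by gcongr
    _ = 1600 * VV x * (2 * m * ((sin (x / 2) ^ 2 + sin (y / 2) ^ 2) / 2) /
          (2 * sin (x / 2) * sin (y / 2) ^ 2)) := by ring
    _ ≤ 1600 * VV x * ((cos (x / 2) + cos (y / 2)) *
          (1 + sin (y / 2) ^ 2 + cos (x / 2) * cos (y / 2)) /
          (2 * sin (x / 2) * sin (y / 2) ^ 2)) := by gcongr

lemma K1_le_VV_mul_deriv (hx : x ∈ Ioo 0 (2 * π)) (hy : y ∈ Ioo 0 (2 * π - x))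
    (hρ : cosSinRatio x y ∈ Ioc 4 5) :
    K1 x y ≤ 1600 * VV x *
      -(deriv (cosSinRatio x) y / (2 * √(cosSinRatio x y - 4))) := by
  have hy' : y ∈ Ioo 0 (2 * π) := ⟨hy.1, by linarith [hy.2, hx.1]⟩
  have hroot : 0 < √(cosSinRatio x y - 4) := sqrt_pos.2 (sub_pos.2 hρ.1)
  calc K1 x y = 8 / √(sin (x / 2) * sin (y / 2)) / (2 * √(cosSinRatio x y - 4)) := by
        rw [K1_eq_of_lt_cosSinRatio hx hy' hρ.1, div_div]
        have hm := sqrt_pos.2 (mul_pos (sin_half_pos hx) (sin_half_pos hy'))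
        field_simp
        norm_num
    _ ≤ 1600 * VV x * -deriv (cosSinRatio x) y / (2 * √(cosSinRatio x y - 4)) := by
        gcongr
        exact div_sqrt_sin_mul_sin_le hx hy (Ioc_subset_Icc_self hρ)
    _ = 1600 * VV x * -(deriv (cosSinRatio x) y / (2 * √(cosSinRatio x y - 4))) := by ring

-- `√(ρ(x,·) - 4)` is decreasing, and maps the region of integration into `(0, √ε)`.
lemma setLIntegral_K1_nearSingular_le_half (hx : x ∈ Ioo 0 (2 * π)) (hε : ε ≤ 1) :
    ∫⁻ y in Ioo 0 (2 * π - x) ∩ Prod.mk x ⁻¹' nearSingular ε, .ofReal (K1 x y) ≤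
      .ofReal (1600 * VV x) * .ofReal √ε := by
  set s := Ioo 0 (2 * π - x) ∩ Prod.mk x ⁻¹' nearSingular ε
  have hs : MeasurableSet s :=
    measurableSet_Ioo.inter (measurable_prodMk_left (measurableSet_nearSingular ε))
  have hderiv : ∀ y ∈ s, HasDerivWithinAt (fun y => √(cosSinRatio x y - 4))
      (deriv (cosSinRatio x) y / (2 * √(cosSinRatio x y - 4))) s y := fun y hy =>
    have hy' : y ∈ Ioo 0 (2 * π) := ⟨hy.1.1, by linarith [hy.1.2, hx.1]⟩
    (((hasDerivAt_cosSinRatio hx hy').differentiableAt.hasDerivAt.sub_const 4).sqrt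
      (sub_pos.2 hy.2.1).ne').hasDerivWithinAt
  have hanti : AntitoneOn (fun y => √(cosSinRatio x y - 4)) s := fun y hy y' hy' hle =>
    sqrt_le_sqrt (sub_le_sub_right ((strictAntiOn_cosSinRatio hx).antitoneOn hy.1 hy'.1 hle) 4)
  have himage : (fun y => √(cosSinRatio x y - 4)) '' s ⊆ Ioo 0 √ε := by
    rintro _ ⟨y, hy, rfl⟩
    exact ⟨sqrt_pos.2 (sub_pos.2 hy.2.1),
      sqrt_lt_sqrt (sub_pos.2 hy.2.1).le (sub_lt_iff_lt_add'.2 hy.2.2)⟩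
  calc ∫⁻ y in s, .ofReal (K1 x y)
      ≤ ∫⁻ y in s, .ofReal (1600 * VV x) *
          .ofReal (-(deriv (cosSinRatio x) y / (2 * √(cosSinRatio x y - 4)))) := by
        refine setLIntegral_mono' hs fun y hy => ?_
        rw [← ENNReal.ofReal_mul (mul_nonneg (by norm_num) (VV_nonneg x))]
        exact ENNReal.ofReal_le_ofReal (K1_le_VV_mul_deriv hx hy.1
          ⟨hy.2.1, by linarith [hy.2.2]⟩)
    _ = .ofReal (1600 * VV x) * volume ((fun y => √(cosSinRatio x y - 4)) '' s) := by
        rw [lintegral_const_mul' _ _ ENNReal.ofReal_ne_top,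
          lintegral_deriv_eq_volume_image_of_antitoneOn hs hderiv hanti]
    _ ≤ .ofReal (1600 * VV x) * .ofReal √ε := by
        gcongr
        simpa using measure_mono (μ := volume) himage

lemma setLIntegral_K1_nearSingular_le (hx : x ∈ Ioo 0 (2 * π)) (hε : ε ≤ 1) :
    ∫⁻ y in Prod.mk x ⁻¹' nearSingular ε, .ofReal (K1 x y) ∂muI ≤
      .ofReal (3200 * √ε) * .ofReal (VV x) := by
  have hsection : ∀ x, MeasurableSet (Prod.mk x ⁻¹' nearSingular ε) := fun x =>
    measurable_prodMk_left (measurableSet_nearSingular ε)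
  have hhalf : ∀ x ∈ Ioo 0 (2 * π), ∫⁻ y in Ioo 0 (2 * π - x),
      (Prod.mk x ⁻¹' nearSingular ε).indicator (fun y => .ofReal (K1 x y)) y ≤
        .ofReal (1600 * VV x) * .ofReal √ε := fun x hx => by
    rw [lintegral_indicator (hsection x), Measure.restrict_restrict (hsection x), inter_comm]
    exact setLIntegral_K1_nearSingular_le_half hx hε
  have hreflect : ∀ y, (Prod.mk x ⁻¹' nearSingular ε).indicator
      (fun y => ENNReal.ofReal (K1 x y)) (2 * π - y) =
      (Prod.mk (2 * π - x) ⁻¹' nearSingular ε).indicator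
        (fun y => ENNReal.ofReal (K1 (2 * π - x) y)) y := fun y => by
    simp only [indicator, nearSingular, mem_preimage, mem_ofPred_eq]
    rw [← cosSinRatio_reflect x, ← K1_reflect x, sub_sub_cancel]
  rw [← lintegral_indicator (hsection x), lintegral_muI_eq_add _ (reflect_mem_Ioo hx),
    setLIntegral_Ioo_reflect (2 * π - x), sub_self, sub_sub_cancel]
  simp_rw [hreflect]
  have hx' := hhalf _ (reflect_mem_Ioo hx)
  rw [sub_sub_cancel, VV_reflect] at hx'
  calc _ ≤ ENNReal.ofReal (1600 * VV x) * .ofReal √ε + .ofReal (1600 * VV x) * .ofReal √ε :=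
        add_le_add hx' (hhalf x hx)
    _ = .ofReal (3200 * √ε) * .ofReal (VV x) := by
        have hV := VV_nonneg x
        rw [← ENNReal.ofReal_mul (by positivity), ← ENNReal.ofReal_mul (by positivity),
          ← ENNReal.ofReal_add (by positivity) (by positivity)]
        ring_nf

lemma K1_le_of_notMem_nearSingular (hε : 0 < ε) (hx : x ∈ Ioo 0 (2 * π))
    (hy : y ∈ Ioo 0 (2 * π)) (hxy : (x, y) ∉ nearSingular ε) :
    K1 x y ≤ 4 / √ε * (sin (x / 2) ^ (-(1 / 2) : ℝ) * sin (y / 2) ^ (-(1 / 2) : ℝ)) := by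
  have hpx := sin_half_pos hx
  have hpy := sin_half_pos hy
  rcases le_or_gt (Fm x y) 0 with hF | hF
  · rw [K1_eq_zero_of_Fm_nonpos hF]
    positivity
  have hρ : 4 + ε ≤ cosSinRatio x y := by
    rw [Fm_eq_cosSinRatio_sub_mul hx hy] at hF
    exact not_lt.1 fun h => hxy ⟨sub_pos.1 (pos_of_mul_pos_left hF (by positivity)), h⟩
  rw [K1, if_pos hF]
  refine div_sqrt_le_rpow hpx hpy (sqrt_pos.2 hε) zero_le_four ?_
  rw [sq_sqrt hε.le, Fm_eq_cosSinRatio_sub_mul hx hy]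
  exact mul_le_mul_of_nonneg_right (by linarith) (by positivity)

end Singularity

/-! ### Integral operators with a symmetric kernel of prescribed marginal -/

section KernelOperators

variable {α β : Type*} [MeasurableSpace α] [MeasurableSpace β]
  {μ : Measure α} {ν : Measure β} {V : α → ℝ} {k : α → α → ℝ}

/-- The measure `V dμ`. -/
def weightedMeasure (μ : Measure α) (V : α → ℝ) : Measure α :=
  μ.withDensity fun x => ENNReal.ofReal (V x)

/-- A weight: a measurable function that is positive almost everywhere. -/
structure IsWeight (μ : Measure α) (V : α → ℝ) : Prop where
  measurable : Measurable V
  ae_pos : ∀ᵐ x ∂μ, 0 < V x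

lemma lintegral_weightedMeasure (hV : Measurable V) {g : α → ℝ≥0∞} (hg : Measurable g) :
    ∫⁻ x, g x ∂weightedMeasure μ V = ∫⁻ x, ENNReal.ofReal (V x) * g x ∂μ :=
  lintegral_withDensity_eq_lintegral_mul _ hV.ennreal_ofReal hg

lemma weightedMeasure_absolutelyContinuous (μ : Measure α) (V : α → ℝ) :
    weightedMeasure μ V ≪ μ :=
  withDensity_absolutelyContinuous _ _

lemma IsWeight.absolutelyContinuous (hV : IsWeight μ V) : μ ≪ weightedMeasure μ V := by
  refine withDensity_absolutelyContinuous' hV.measurable.ennreal_ofReal.aemeasurable ?_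
  filter_upwards [hV.ae_pos] with x hx using (ENNReal.ofReal_pos.2 hx).ne'

lemma measurePreserving_of_lintegral_comp {T : α → β} (hT : Measurable T)
    (h : ∀ g : β → ℝ≥0∞, Measurable g → ∫⁻ a, g (T a) ∂μ = ∫⁻ b, g b ∂ν) :
    MeasurePreserving T μ ν :=
  ⟨hT, Measure.ext_of_lintegral _ fun g hg => by rw [lintegral_map hg hT, h g hg]⟩

lemma IsWeight.measurable_rpow_mul (hV : IsWeight μ V) (f : Lp ℂ 2 μ) :
    Measurable fun x => ((V x ^ (-(1 : ℝ) / 2) : ℝ) : ℂ) * f x :=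
  (Complex.measurable_ofReal.comp (hV.measurable.pow_const _)).mul
    (Lp.stronglyMeasurable f).measurable

lemma ofReal_mul_enorm_rpow_neg_half_mul_sq {v : ℝ} (hv : 0 < v) (z : ℂ) :
    ENNReal.ofReal v * ‖((v ^ (-(1 : ℝ) / 2) : ℝ) : ℂ) * z‖ₑ ^ 2 = ‖z‖ₑ ^ 2 := by
  have hsq : (v ^ (-(1 : ℝ) / 2)) ^ 2 = v⁻¹ := by
    rw [← rpow_natCast, ← rpow_mul hv.le, ← rpow_neg_one]; norm_num
  rw [enorm_mul, mul_pow, ← mul_assoc, ← ofReal_norm, Complex.norm_real,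
    norm_of_nonneg (by positivity), ← ENNReal.ofReal_pow (by positivity),
    ← ENNReal.ofReal_mul hv.le, hsq, mul_inv_cancel₀ hv.ne', ENNReal.ofReal_one, one_mul]

lemma IsWeight.eLpNorm_rpow_mul (hV : IsWeight μ V) (f : Lp ℂ 2 μ) :
    eLpNorm (fun x => ((V x ^ (-(1 : ℝ) / 2) : ℝ) : ℂ) * f x) 2 (weightedMeasure μ V)
      = eLpNorm f 2 μ := by
  rw [eLpNorm_eq_lintegral_rpow_enorm_toReal two_ne_zero ENNReal.ofNat_ne_top,
    eLpNorm_eq_lintegral_rpow_enorm_toReal two_ne_zero ENNReal.ofNat_ne_top]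
  simp only [ENNReal.toReal_ofNat, ENNReal.rpow_ofNat]
  rw [lintegral_weightedMeasure hV.measurable ((hV.measurable_rpow_mul f).enorm.pow_const _)]
  congr 1
  refine lintegral_congr_ae ?_
  filter_upwards [hV.ae_pos] with x hx using ofReal_mul_enorm_rpow_neg_half_mul_sq hx (f x)

lemma IsWeight.memLp_rpow_mul (hV : IsWeight μ V) (f : Lp ℂ 2 μ) :
    MemLp (fun x => ((V x ^ (-(1 : ℝ) / 2) : ℝ) : ℂ) * f x) 2 (weightedMeasure μ V) :=
  ⟨(hV.measurable_rpow_mul f).aestronglyMeasurable,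
    (hV.eLpNorm_rpow_mul f).trans_lt (Lp.memLp f).2⟩

/-- The isometry `f ↦ V^(-1/2) f` of `L²(μ)` into `L²(V μ)`. -/
def weightIsometry (hV : IsWeight μ V) : Lp ℂ 2 μ →ₗᵢ[ℂ] Lp ℂ 2 (weightedMeasure μ V) where
  toFun f := (hV.memLp_rpow_mul f).toLp _
  map_add' f g := by
    rw [← MemLp.toLp_add, MemLp.toLp_eq_toLp_iff]
    filter_upwards [(weightedMeasure_absolutelyContinuous μ V).ae_le (Lp.coeFn_add f g)] with x hx
    simp only [Pi.add_apply, hx, mul_add]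
  map_smul' c f := by
    rw [RingHom.id_apply, ← MemLp.toLp_const_smul, MemLp.toLp_eq_toLp_iff]
    filter_upwards [(weightedMeasure_absolutelyContinuous μ V).ae_le (Lp.coeFn_smul c f)] with x hx
    simp only [Pi.smul_apply, hx, smul_eq_mul, mul_left_comm]
  norm_map' f := by
    simp only [LinearMap.coe_mk, AddHom.coe_mk]
    rw [Lp.norm_toLp, hV.eLpNorm_rpow_mul, Lp.norm_def]

/-- The isometry `f ↦ (V^(-1/2) f) ∘ u` of `L²(μ)` into `L²(ν)`, for a map `u` carrying `ν` to
`V μ`. -/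
def pullback (hV : IsWeight μ V) {u : β → α} (hu : MeasurePreserving u ν (weightedMeasure μ V)) :
    Lp ℂ 2 μ →ₗᵢ[ℂ] Lp ℂ 2 ν :=
  (Lp.compMeasurePreservingₗᵢ ℂ u hu).comp (weightIsometry hV)

lemma coeFn_pullback (hV : IsWeight μ V) {u : β → α}
    (hu : MeasurePreserving u ν (weightedMeasure μ V)) (f : Lp ℂ 2 μ) :
    pullback hV hu f =ᵐ[ν] fun b => ((V (u b) ^ (-(1 : ℝ) / 2) : ℝ) : ℂ) * f (u b) :=
  (Lp.coeFn_compMeasurePreserving (weightIsometry hV f) hu).trans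
    (hu.quasiMeasurePreserving.ae_eq_comp (hV.memLp_rpow_mul f).coeFn_toLp)

/-- `k` is a nonnegative symmetric kernel with marginal `∫ k(x, y) dμ(y) = V(x)`, for a weight
`V`. -/
structure IsSymmKernel (μ : Measure α) (V : α → ℝ) (k : α → α → ℝ) : Prop where
  isWeight : IsWeight μ V
  measurable : Measurable fun p : α × α => k p.1 p.2
  nonneg : ∀ x y, 0 ≤ k x y
  symm : ∀ x y, k x y = k y x
  lintegral_eq : ∀ᵐ x ∂μ, ∫⁻ y, ENNReal.ofReal (k x y) ∂μ = ENNReal.ofReal (V x)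

/-- The measure `k(x, y) dμ(x) dμ(y)`. -/
def kernelMeasure (μ : Measure α) (k : α → α → ℝ) : Measure (α × α) :=
  weightedMeasure (μ.prod μ) fun p => k p.1 p.2

lemma kernelMeasure_absolutelyContinuous (μ : Measure α) (k : α → α → ℝ) :
    kernelMeasure μ k ≪ μ.prod μ :=
  weightedMeasure_absolutelyContinuous _ _

/-- The kernel `V(x)^(-1/2) k(x, y) V(y)^(-1/2)`. -/
def normalizedKernel (V : α → ℝ) (k : α → α → ℝ) (p : α × α) : ℝ :=
  V p.1 ^ (-(1 : ℝ) / 2) * k p.1 p.2 * V p.2 ^ (-(1 : ℝ) / 2)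

lemma mul_conj_indicatorConstLp_ae_eq {s : Set α} (hs : MeasurableSet s) (hμs : μ s ≠ ∞)
    (F : α × α → ℂ) (f : α → ℂ) :
    (fun p => F p * (f p.2 * conj ((indicatorConstLp 2 hs hμs (1 : ℂ) : Lp ℂ 2 μ) p.1)))
      =ᵐ[μ.prod μ] (s ×ˢ univ).indicator fun p => F p * f p.2 := by
  filter_upwards [Measure.quasiMeasurePreserving_fst.ae
    (indicatorConstLp_coeFn (p := 2) (hs := hs) (hμs := hμs) (c := (1 : ℂ)))] with p hp
  by_cases hps : p.1 ∈ s <;> simp [hp, hps]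

namespace IsSymmKernel

lemma toReal_smul_inner_eq (hk : IsSymmKernel μ V k) (φ f : Lp ℂ 2 μ) :
    (fun p => (ENNReal.ofReal (k p.1 p.2)).toReal •
      inner ℂ (((V p.1 ^ (-(1 : ℝ) / 2) : ℝ) : ℂ) * φ p.1)
        (((V p.2 ^ (-(1 : ℝ) / 2) : ℝ) : ℂ) * f p.2))
      = fun p => (normalizedKernel V k p : ℂ) * (f p.2 * conj (φ p.1)) := by
  ext p
  rw [ENNReal.toReal_ofReal (hk.nonneg _ _), Complex.real_smul, RCLike.inner_apply, map_mul,
    Complex.conj_ofReal, normalizedKernel]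
  push_cast
  ring

variable [SFinite μ]

lemma lintegral_kernelMeasure (hk : IsSymmKernel μ V k) {g : α × α → ℝ≥0∞} (hg : Measurable g) :
    ∫⁻ p, g p ∂kernelMeasure μ k = ∫⁻ x, ∫⁻ y, ENNReal.ofReal (k x y) * g (x, y) ∂μ ∂μ :=
  (lintegral_weightedMeasure hk.measurable hg).trans
    (lintegral_prod _ (hk.measurable.ennreal_ofReal.mul hg).aemeasurable)

lemma measurePreserving_fst (hk : IsSymmKernel μ V k) :
    MeasurePreserving Prod.fst (kernelMeasure μ k) (weightedMeasure μ V) := by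
  refine measurePreserving_of_lintegral_comp measurable_fst fun g hg => ?_
  rw [hk.lintegral_kernelMeasure (g := fun p => g p.1) (hg.comp measurable_fst),
    lintegral_weightedMeasure hk.isWeight.measurable hg]
  refine lintegral_congr_ae ?_
  filter_upwards [hk.lintegral_eq] with x hx
  have hmeas : Measurable fun y => ENNReal.ofReal (k x y) :=
    (hk.measurable.comp measurable_prodMk_left).ennreal_ofReal
  rw [lintegral_mul_const _ hmeas, hx]

lemma measurePreserving_swap (hk : IsSymmKernel μ V k) :
    MeasurePreserving Prod.swap (kernelMeasure μ k) (kernelMeasure μ k) := by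
  refine measurePreserving_of_lintegral_comp measurable_swap fun g hg => ?_
  have hmeas : Measurable fun p : α × α => ENNReal.ofReal (k p.1 p.2) * g p :=
    hk.measurable.ennreal_ofReal.mul hg
  rw [hk.lintegral_kernelMeasure (g := fun p => g p.swap) (hg.comp measurable_swap),
    hk.lintegral_kernelMeasure hg, lintegral_lintegral_swap (μ := μ) (ν := μ)
      (f := fun x y => ENNReal.ofReal (k x y) * g (x, y)) hmeas.aemeasurable]
  simp only [Prod.swap_prod_mk]
  exact lintegral_congr fun y => lintegral_congr fun x => by rw [hk.symm]

lemma measurePreserving_snd (hk : IsSymmKernel μ V k) :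
    MeasurePreserving Prod.snd (kernelMeasure μ k) (weightedMeasure μ V) :=
  hk.measurePreserving_fst.comp hk.measurePreserving_swap

/-- The operator with integral kernel `normalizedKernel V k`, factored through `L²(k dμ dμ)` so that
its boundedness comes for free. -/
def kernelOp (hk : IsSymmKernel μ V k) : Lp ℂ 2 μ →L[ℂ] Lp ℂ 2 μ :=
  ContinuousLinearMap.adjoint
      (pullback hk.isWeight hk.measurePreserving_fst).toContinuousLinearMap ∘L
    (pullback hk.isWeight hk.measurePreserving_snd).toContinuousLinearMap

lemma adjoint_pullback_comp_pullback (hk : IsSymmKernel μ V k) {T : β → α × α}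
    (hT : MeasurePreserving T ν (kernelMeasure μ k)) :
    ContinuousLinearMap.adjoint
        (pullback hk.isWeight (hk.measurePreserving_fst.comp hT)).toContinuousLinearMap ∘L
      (pullback hk.isWeight (hk.measurePreserving_snd.comp hT)).toContinuousLinearMap
      = hk.kernelOp := by
  have factor {u : α × α → α} (hu : MeasurePreserving u (kernelMeasure μ k) (weightedMeasure μ V))
      (f : Lp ℂ 2 μ) : pullback hk.isWeight (hu.comp hT) f
        = Lp.compMeasurePreservingₗᵢ ℂ T hT (pullback hk.isWeight hu f) := by
    refine Lp.ext <| (coeFn_pullback _ _ f).trans ?_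
    exact ((Lp.coeFn_compMeasurePreserving _ hT).trans
      (hT.quasiMeasurePreserving.ae_eq_comp (coeFn_pullback hk.isWeight hu f))).symm
  ext1 f
  refine ext_inner_left ℂ fun φ => ?_
  simp only [kernelOp, ContinuousLinearMap.comp_apply, ContinuousLinearMap.adjoint_inner_right,
    LinearIsometry.coe_toContinuousLinearMap]
  rw [factor, factor, LinearIsometry.inner_map_map]

lemma isSelfAdjoint_kernelOp (hk : IsSymmKernel μ V k) : IsSelfAdjoint hk.kernelOp := by
  rw [ContinuousLinearMap.isSelfAdjoint_iff']
  conv_lhs => rw [kernelOp, ContinuousLinearMap.adjoint_comp, ContinuousLinearMap.adjoint_adjoint]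
  exact hk.adjoint_pullback_comp_pullback hk.measurePreserving_swap

lemma inner_pullback_ae_eq (hk : IsSymmKernel μ V k) (φ f : Lp ℂ 2 μ) :
    (fun p => inner ℂ (pullback hk.isWeight hk.measurePreserving_fst φ p)
        (pullback hk.isWeight hk.measurePreserving_snd f p)) =ᵐ[kernelMeasure μ k]
      fun p => inner ℂ (((V p.1 ^ (-(1 : ℝ) / 2) : ℝ) : ℂ) * φ p.1)
        (((V p.2 ^ (-(1 : ℝ) / 2) : ℝ) : ℂ) * f p.2) := by
  filter_upwards [coeFn_pullback hk.isWeight hk.measurePreserving_fst φ,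
    coeFn_pullback hk.isWeight hk.measurePreserving_snd f] with p hφ hf
  rw [hφ, hf]

lemma integrable_normalizedKernel_mul_mul (hk : IsSymmKernel μ V k) (φ f : Lp ℂ 2 μ) :
    Integrable (fun p => (normalizedKernel V k p : ℂ) * (f p.2 * conj (φ p.1))) (μ.prod μ) := by
  rw [← hk.toReal_smul_inner_eq]
  refine (integrable_withDensity_iff_integrable_smul' hk.measurable.ennreal_ofReal
    (.of_forall fun _ => ENNReal.ofReal_lt_top)).1 ?_
  exact (L2.integrable_inner (𝕜 := ℂ) _ _).congr (hk.inner_pullback_ae_eq φ f)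

lemma inner_kernelOp (hk : IsSymmKernel μ V k) (φ f : Lp ℂ 2 μ) :
    inner ℂ φ (hk.kernelOp f)
      = ∫ p, (normalizedKernel V k p : ℂ) * (f p.2 * conj (φ p.1)) ∂μ.prod μ := by
  rw [kernelOp, ContinuousLinearMap.comp_apply, ContinuousLinearMap.adjoint_inner_right,
    LinearIsometry.coe_toContinuousLinearMap, LinearIsometry.coe_toContinuousLinearMap,
    L2.inner_def, integral_congr_ae (hk.inner_pullback_ae_eq φ f), ← hk.toReal_smul_inner_eq]
  exact integral_withDensity_eq_integral_toReal_smul₀ hk.measurable.ennreal_ofReal.aemeasurable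
    (.of_forall fun _ => ENNReal.ofReal_lt_top) _

variable [IsFiniteMeasure μ]

lemma integrable_normalizedKernel_mul (hk : IsSymmKernel μ V k) (f : Lp ℂ 2 μ) :
    Integrable (fun p => (normalizedKernel V k p : ℂ) * f p.2) (μ.prod μ) := by
  have h := (hk.integrable_normalizedKernel_mul_mul _ f).congr
    (mul_conj_indicatorConstLp_ae_eq .univ (measure_ne_top μ _) _ f)
  rwa [univ_prod_univ, indicator_univ] at h

lemma coeFn_kernelOp (hk : IsSymmKernel μ V k) (f : Lp ℂ 2 μ) :
    hk.kernelOp f =ᵐ[μ] fun x => ∫ y, (normalizedKernel V k (x, y) : ℂ) * f y ∂μ := by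
  have hInt := hk.integrable_normalizedKernel_mul f
  refine Integrable.ae_eq_of_forall_setIntegral_eq _ _
    ((Lp.memLp _).integrable one_le_two) hInt.integral_prod_left fun s hs hμs => ?_
  rw [← L2.inner_indicatorConstLp_one hs hμs.ne, hk.inner_kernelOp,
    integral_congr_ae (mul_conj_indicatorConstLp_ae_eq hs hμs.ne _ f),
    integral_indicator (hs.prod .univ), setIntegral_prod _ hInt.integrableOn]
  simp only [Measure.restrict_univ]

end IsSymmKernel

end KernelOperators

/-! ### The collision operator -/

lemma adjoint_comp_self_half_add_sub {E F : Type*} [NormedAddCommGroup E]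
    [InnerProductSpace ℂ E] [CompleteSpace E] [NormedAddCommGroup F] [InnerProductSpace ℂ F]
    [CompleteSpace F] {X Y Z W : E →ₗᵢ[ℂ] F} {B₁ B₂ : E →L[ℂ] E}
    (h₁ : IsSelfAdjoint B₁) (h₂ : IsSelfAdjoint B₂)
    (hXY : X.toContinuousLinearMap.adjoint ∘L Y.toContinuousLinearMap = B₁)
    (hZW : Z.toContinuousLinearMap.adjoint ∘L W.toContinuousLinearMap = B₁)
    (hXZ : X.toContinuousLinearMap.adjoint ∘L Z.toContinuousLinearMap = B₂)
    (hXW : X.toContinuousLinearMap.adjoint ∘L W.toContinuousLinearMap = B₂)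
    (hYZ : Y.toContinuousLinearMap.adjoint ∘L Z.toContinuousLinearMap = B₂)
    (hYW : Y.toContinuousLinearMap.adjoint ∘L W.toContinuousLinearMap = B₂) :
    ((1 / 2 : ℂ) • (X.toContinuousLinearMap + Y.toContinuousLinearMap
        - Z.toContinuousLinearMap - W.toContinuousLinearMap)).adjoint ∘L
      ((1 / 2 : ℂ) • (X.toContinuousLinearMap + Y.toContinuousLinearMap
        - Z.toContinuousLinearMap - W.toContinuousLinearMap)) = 1 - ((2 : ℂ) • B₂ - B₁) := by
  have inner_eq {S T : E →ₗᵢ[ℂ] F} {B : E →L[ℂ] E}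
      (h : S.toContinuousLinearMap.adjoint ∘L T.toContinuousLinearMap = B) (f g : E) :
      inner ℂ (S f) (T g) = inner ℂ f (B g) := by
    rw [← h, ContinuousLinearMap.comp_apply, ContinuousLinearMap.adjoint_inner_right]; rfl
  have inner_eq' {S T : E →ₗᵢ[ℂ] F} {B : E →L[ℂ] E} (hB : IsSelfAdjoint B)
      (h : S.toContinuousLinearMap.adjoint ∘L T.toContinuousLinearMap = B) (f g : E) :
      inner ℂ (T f) (S g) = inner ℂ f (B g) := by
    rw [← inner_conj_symm, inner_eq h, inner_conj_symm]
    exact hB.isSymmetric f g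
  ext1 g
  refine ext_inner_left ℂ fun f => ?_
  simp only [ContinuousLinearMap.comp_apply, ContinuousLinearMap.adjoint_inner_right,
    smul_apply, sub_apply, add_apply, one_apply_eq_self, LinearIsometry.coe_toContinuousLinearMap,
    inner_smul_left, inner_smul_right, inner_add_left, inner_add_right, inner_sub_left,
    inner_sub_right, LinearIsometry.inner_map_map, inner_eq hXY, inner_eq hZW, inner_eq hXZ,
    inner_eq hXW, inner_eq hYZ, inner_eq hYW, inner_eq' h₁ hXY, inner_eq' h₁ hZW,
    inner_eq' h₂ hXZ, inner_eq' h₂ hXW, inner_eq' h₂ hYZ, inner_eq' h₂ hYW, map_div₀, map_one,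
    map_ofNat]
  ring

instance isFiniteMeasure_muI : IsFiniteMeasure muI := by unfold muI II; infer_instance

instance nullSingletonClass_muI : NullSingletonClass muI := by unfold muI; infer_instance

lemma measurable_VV : Measurable VV :=
  (measurable_K2.stronglyMeasurable.integral_prod_right' (ν := muI)).measurable

lemma isWeight_VV : IsWeight muI VV where
  measurable := measurable_VV
  ae_pos := by filter_upwards [ae_muI_mem_Ioo] with x hx using VV_pos hx

lemma isSymmKernel_K2 : IsSymmKernel muI VV K2 where
  isWeight := isWeight_VV
  measurable := measurable_K2
  nonneg := K2_nonneg
  symm := K2_comm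
  lintegral_eq := by filter_upwards [ae_muI_mem_Ioo] with x hx using lintegral_K2 hx

lemma isSymmKernel_K1 : IsSymmKernel muI VV K1 where
  isWeight := isWeight_VV
  measurable := measurable_K1
  nonneg := K1_nonneg
  symm := K1_comm
  lintegral_eq := by
    filter_upwards [ae_muI_mem_Ioo] with x hx
    simpa [lintegral_K2 hx] using
      (lintegral_K2_mul_comp_partner hx (Φ := fun _ => 1) measurable_const).symm

/-- The measure `K₂(x, z) dx dz` on collisions `(x, partner x z) → (z, recoil x z)`. -/
abbrev collisionMeasure : Measure (ℝ × ℝ) := kernelMeasure muI K2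

lemma ae_prod_mem_Ioo :
    ∀ᵐ p ∂muI.prod muI, p.1 ∈ Ioo 0 (2 * π) ∧ p.2 ∈ Ioo 0 (2 * π) :=
  (Measure.quasiMeasurePreserving_fst.ae ae_muI_mem_Ioo).and
    (Measure.quasiMeasurePreserving_snd.ae ae_muI_mem_Ioo)

lemma ae_prod_fst_ne_snd {α : Type*} [MeasurableSpace α] [MeasurableEq α] {μ ν : Measure α}
    [SFinite ν] [NullSingletonClass ν] : ∀ᵐ p ∂μ.prod ν, p.1 ≠ p.2 := by
  refine (Measure.ae_prod_iff_ae_ae ?_).2 (.of_forall fun x => ?_)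
  · exact (measurableSet_eq_fun measurable_fst measurable_snd).compl
  · filter_upwards [compl_mem_ae_iff.2 (measure_singleton (μ := ν) x)] with y hy using Ne.symm hy

lemma prod_muI_absolutelyContinuous_collisionMeasure : muI.prod muI ≪ collisionMeasure := by
  refine IsWeight.absolutelyContinuous ⟨measurable_K2, ?_⟩
  filter_upwards [ae_prod_mem_Ioo] with p hp using div_pos two_pos (sqrt_pos.2 (Fp_pos hp.1 hp.2))

lemma measurePreserving_fst_recoil :
    MeasurePreserving (fun p : ℝ × ℝ => (p.1, recoil p.1 p.2)) collisionMeasure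
      collisionMeasure := by
  have hmeas : Measurable fun p : ℝ × ℝ => (p.1, recoil p.1 p.2) :=
    measurable_fst.prodMk measurable_recoil
  refine measurePreserving_of_lintegral_comp hmeas fun g hg => ?_
  rw [isSymmKernel_K2.lintegral_kernelMeasure hg,
    isSymmKernel_K2.lintegral_kernelMeasure (g := fun p => g (p.1, recoil p.1 p.2))
      (hg.comp hmeas)]
  refine lintegral_congr_ae ?_
  filter_upwards [ae_muI_mem_Ioo] with x hx
    using lintegral_K2_mul_comp_recoil hx fun z => g (x, z)

lemma measurePreserving_fst_partner :
    MeasurePreserving (fun p : ℝ × ℝ => (p.1, partner p.1 p.2)) collisionMeasure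
      (kernelMeasure muI K1) := by
  have hmeas : Measurable fun p : ℝ × ℝ => (p.1, partner p.1 p.2) :=
    measurable_fst.prodMk measurable_partner
  refine measurePreserving_of_lintegral_comp hmeas fun g hg => ?_
  rw [isSymmKernel_K1.lintegral_kernelMeasure hg,
    isSymmKernel_K2.lintegral_kernelMeasure (g := fun p => g (p.1, partner p.1 p.2))
      (hg.comp hmeas)]
  refine lintegral_congr_ae ?_
  filter_upwards [ae_muI_mem_Ioo] with x hx
    using lintegral_K2_mul_comp_partner hx (hg.comp measurable_prodMk_left)

lemma measurePreserving_snd_recoil :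
    MeasurePreserving (fun p : ℝ × ℝ => (p.2, recoil p.1 p.2)) collisionMeasure
      (kernelMeasure muI K1) := by
  simpa only [Function.comp_def, Prod.fst_swap, Prod.snd_swap, partner_swap] using
    measurePreserving_fst_partner.comp isSymmKernel_K2.measurePreserving_swap

lemma measurePreserving_partner_snd :
    MeasurePreserving (fun p : ℝ × ℝ => (partner p.1 p.2, p.2)) collisionMeasure
      collisionMeasure := by
  have hswap := isSymmKernel_K2.measurePreserving_swap
  simpa only [Function.comp_def, Prod.swap_prod_mk, Prod.fst_swap, Prod.snd_swap, ← partner_swap]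
    using hswap.comp (measurePreserving_fst_recoil.comp hswap)

lemma measurePreserving_partner_recoil :
    MeasurePreserving (fun p : ℝ × ℝ => (partner p.1 p.2, recoil p.1 p.2)) collisionMeasure
      collisionMeasure := by
  refine (measurePreserving_partner_snd.comp measurePreserving_fst_recoil).congr
    (measurable_partner.prodMk measurable_recoil) (kernelMeasure_absolutelyContinuous _ _ ?_)
  filter_upwards [ae_prod_mem_Ioo, ae_prod_fst_ne_snd] with p hp hne
  simp only [Function.comp_apply, partner_recoil hp.1 hp.2 hne]

lemma measurePreserving_partner :
    MeasurePreserving (fun p : ℝ × ℝ => partner p.1 p.2) collisionMeasure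
      (weightedMeasure muI VV) :=
  isSymmKernel_K1.measurePreserving_snd.comp measurePreserving_fst_partner

lemma measurePreserving_recoil :
    MeasurePreserving (fun p : ℝ × ℝ => recoil p.1 p.2) collisionMeasure
      (weightedMeasure muI VV) :=
  isSymmKernel_K2.measurePreserving_snd.comp measurePreserving_fst_recoil

/-- The operator `B` with kernel `V(x)^(-1/2) (2 K₂(x, y) - K₁(x, y)) V(y)^(-1/2)`. -/
def gainOp : Lp ℂ 2 muI →L[ℂ] Lp ℂ 2 muI :=
  (2 : ℂ) • isSymmKernel_K2.kernelOp - isSymmKernel_K1.kernelOp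

/-- Half the collision defect `g(x) + g(y) - g(z) - g(w)` of `g = V^(-1/2) ψ`, as a function of the
collision `(x, y) → (z, w)`. -/
def collisionDefect : Lp ℂ 2 muI →L[ℂ] Lp ℂ 2 collisionMeasure :=
  (1 / 2 : ℂ) • ((pullback isWeight_VV isSymmKernel_K2.measurePreserving_fst).toContinuousLinearMap
    + (pullback isWeight_VV measurePreserving_partner).toContinuousLinearMap
    - (pullback isWeight_VV isSymmKernel_K2.measurePreserving_snd).toContinuousLinearMap
    - (pullback isWeight_VV measurePreserving_recoil).toContinuousLinearMap)

lemma adjoint_collisionDefect_comp_self :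
    collisionDefect.adjoint ∘L collisionDefect = 1 - gainOp :=
  adjoint_comp_self_half_add_sub isSymmKernel_K1.isSelfAdjoint_kernelOp
    isSymmKernel_K2.isSelfAdjoint_kernelOp
    (isSymmKernel_K1.adjoint_pullback_comp_pullback measurePreserving_fst_partner)
    (isSymmKernel_K1.adjoint_pullback_comp_pullback measurePreserving_snd_recoil)
    rfl
    (isSymmKernel_K2.adjoint_pullback_comp_pullback measurePreserving_fst_recoil)
    (isSymmKernel_K2.adjoint_pullback_comp_pullback measurePreserving_partner_snd)
    (isSymmKernel_K2.adjoint_pullback_comp_pullback measurePreserving_partner_recoil)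

lemma isSelfAdjoint_gainOp : IsSelfAdjoint gainOp :=
  ((IsSelfAdjoint.ofNat 2 : IsSelfAdjoint (2 : ℂ)).smul isSymmKernel_K2.isSelfAdjoint_kernelOp).sub
    isSymmKernel_K1.isSelfAdjoint_kernelOp

lemma isPositive_one_sub_gainOp : (1 - gainOp).IsPositive :=
  adjoint_collisionDefect_comp_self ▸ ContinuousLinearMap.isPositive_adjoint_comp_self _

lemma gainOp_eq_self_iff (ψ : Lp ℂ 2 muI) : gainOp ψ = ψ ↔ collisionDefect ψ = 0 := by
  have hker := SetLike.ext_iff.1 (ContinuousLinearMap.ker_adjoint_comp_self collisionDefect) ψ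
  rw [adjoint_collisionDefect_comp_self] at hker
  simpa [LinearMap.mem_ker, sub_eq_zero, eq_comm (a := ψ)] using hker

lemma coeFn_gainOp (f : Lp ℂ 2 muI) :
    gainOp f =ᵐ[muI] fun x => ∫ y in II,
      ((VV x ^ (-(1 : ℝ) / 2) * (2 * K2 x y - K1 x y) * VV y ^ (-(1 : ℝ) / 2) : ℝ) : ℂ) * f y := by
  filter_upwards [Lp.coeFn_sub ((2 : ℂ) • isSymmKernel_K2.kernelOp f) (isSymmKernel_K1.kernelOp f),
    Lp.coeFn_smul (2 : ℂ) (isSymmKernel_K2.kernelOp f), isSymmKernel_K1.coeFn_kernelOp f,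
    isSymmKernel_K2.coeFn_kernelOp f,
    (isSymmKernel_K1.integrable_normalizedKernel_mul f).prod_right_ae,
    (isSymmKernel_K2.integrable_normalizedKernel_mul f).prod_right_ae]
    with x hsub hsmul hB₁ hB₂ hInt₁ hInt₂
  refine hsub.trans ?_
  rw [Pi.sub_apply, hsmul, Pi.smul_apply, hB₁, hB₂, smul_eq_mul, ← integral_const_mul,
    ← integral_sub (hInt₂.const_mul 2) hInt₁]
  refine integral_congr_ae (.of_forall fun y => ?_)
  simp only [normalizedKernel]
  push_cast
  ring

/-! ### Collisional invariants -/

lemma coeFn_collisionDefect (ψ : Lp ℂ 2 muI) :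
    collisionDefect ψ =ᵐ[collisionMeasure] fun p =>
      (1 / 2 : ℂ) * (((VV p.1 ^ (-(1 : ℝ) / 2) : ℝ) : ℂ) * ψ p.1
        + ((VV (partner p.1 p.2) ^ (-(1 : ℝ) / 2) : ℝ) : ℂ) * ψ (partner p.1 p.2)
        - ((VV p.2 ^ (-(1 : ℝ) / 2) : ℝ) : ℂ) * ψ p.2
        - ((VV (recoil p.1 p.2) ^ (-(1 : ℝ) / 2) : ℝ) : ℂ) * ψ (recoil p.1 p.2)) := by
  let X := pullback isWeight_VV isSymmKernel_K2.measurePreserving_fst ψ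
  let Y := pullback isWeight_VV measurePreserving_partner ψ
  let Z := pullback isWeight_VV isSymmKernel_K2.measurePreserving_snd ψ
  let W := pullback isWeight_VV measurePreserving_recoil ψ
  filter_upwards [coeFn_pullback isWeight_VV isSymmKernel_K2.measurePreserving_fst ψ,
    coeFn_pullback isWeight_VV measurePreserving_partner ψ,
    coeFn_pullback isWeight_VV isSymmKernel_K2.measurePreserving_snd ψ,
    coeFn_pullback isWeight_VV measurePreserving_recoil ψ,
    Lp.coeFn_smul (1 / 2 : ℂ) (X + Y - Z - W), Lp.coeFn_sub (X + Y - Z) W,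
    Lp.coeFn_sub (X + Y) Z, Lp.coeFn_add X Y] with p hX hY hZ hW hsmul hsubW hsubZ hadd
  refine hsmul.trans ?_
  rw [Pi.smul_apply, hsubW, Pi.sub_apply, hsubZ, Pi.sub_apply, hadd, Pi.add_apply, hX, hY, hZ, hW,
    smul_eq_mul]

lemma periodicVinvHalf_of_mem {x : ℝ} (hx : x ∈ II) (ψ : ℝ → ℂ) :
    periodicVinvHalf ψ x = ((VV x ^ (-(1 : ℝ) / 2) : ℝ) : ℂ) * ψ x := by
  rw [periodicVinvHalf, mod2pi_of_mem hx]

lemma collisionDefect_eq_zero_iff (ψ : Lp ℂ 2 muI) :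
    collisionDefect ψ = 0 ↔ ∀ᵐ p ∂muI.prod muI,
      periodicVinvHalf ψ p.1 + periodicVinvHalf ψ (hFPU p.1 p.2) - periodicVinvHalf ψ p.2
        - periodicVinvHalf ψ (p.1 - p.2 + hFPU p.1 p.2) = 0 := by
  have hdefect : ∀ᵐ p ∂muI.prod muI, collisionDefect ψ p = (1 / 2 : ℂ) *
      (periodicVinvHalf ψ p.1 + periodicVinvHalf ψ (hFPU p.1 p.2) - periodicVinvHalf ψ p.2
        - periodicVinvHalf ψ (p.1 - p.2 + hFPU p.1 p.2)) := by
    filter_upwards [prod_muI_absolutelyContinuous_collisionMeasure.ae_le (coeFn_collisionDefect ψ),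
      ae_prod_mem_Ioo] with p hp hmem
    rw [hp, periodicVinvHalf_of_mem (Ioo_subset_Ico_self hmem.1),
      periodicVinvHalf_of_mem (Ioo_subset_Ico_self hmem.2), periodicVinvHalf, periodicVinvHalf,
      mod2pi_hFPU, mod2pi_sub_add_hFPU, mod2pi_of_mem (Ioo_subset_Ico_self hmem.1),
      mod2pi_of_mem (Ioo_subset_Ico_self hmem.2)]
  rw [Lp.eq_zero_iff_ae_eq_zero]
  constructor <;> intro h
  · filter_upwards [prod_muI_absolutelyContinuous_collisionMeasure.ae_le h, hdefect] with p hp hp'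
    simpa [hp] using hp'.symm
  · filter_upwards [kernelMeasure_absolutelyContinuous muI K2 h,
      kernelMeasure_absolutelyContinuous muI K2 hdefect] with p hp hp'
    simp [hp', hp]

lemma quasiMeasurePreserving_mod2pi : Measure.QuasiMeasurePreserving mod2pi volume muI := by
  refine ⟨measurable_mod2pi, Measure.AbsolutelyContinuous.mk fun s hs hs0 => ?_⟩
  rw [Measure.map_apply measurable_mod2pi hs]
  have hcover : mod2pi ⁻¹' s ⊆ ⋃ n : ℤ, (fun x => x - 2 * π * n) ⁻¹' (s ∩ II) :=
    fun x hx => mem_iUnion.2 ⟨⌊x / (2 * π)⌋, hx, mod2pi_mem x⟩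
  refine measure_mono_null hcover (measure_iUnion_null fun n => ?_)
  rw [(measurePreserving_sub_right volume (2 * π * n)).measure_preimage
    (hs.inter (show MeasurableSet II from measurableSet_Ico)).nullMeasurableSet,
    ← Measure.restrict_apply hs]
  exact hs0

lemma ae_collisional_invariant_iff (ψ : ℝ → ℂ) :
    (∀ᵐ p ∂muI.prod muI,
      periodicVinvHalf ψ p.1 + periodicVinvHalf ψ (hFPU p.1 p.2) - periodicVinvHalf ψ p.2
        - periodicVinvHalf ψ (p.1 - p.2 + hFPU p.1 p.2) = 0) ↔
    ∀ᵐ p : ℝ × ℝ,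
      periodicVinvHalf ψ p.1 + periodicVinvHalf ψ (hFPU p.1 p.2) - periodicVinvHalf ψ p.2
        - periodicVinvHalf ψ (p.1 - p.2 + hFPU p.1 p.2) = 0 := by
  rw [Measure.volume_eq_prod]
  constructor <;> intro h
  · have hmod := (QuasiMeasurePreserving.prodMap quasiMeasurePreserving_mod2pi
      quasiMeasurePreserving_mod2pi).ae h
    filter_upwards [hmod] with p hp
    simpa only [periodicVinvHalf, Prod.map_fst, Prod.map_snd, mod2pi_hFPU, mod2pi_sub_add_hFPU,
      mod2pi_of_mem (mod2pi_mem _)] using hp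
  · exact Measure.AbsolutelyContinuous.prod Measure.restrict_le_self.absolutelyContinuous
      Measure.restrict_le_self.absolutelyContinuous h

/-! ### Multiplication operators -/

section Multiplication

variable {α : Type*} [MeasurableSpace α] {μ : Measure α} {m : α → ℝ}

/-- Multiplication by an essentially bounded real function, as an operator on `L²(μ)`. -/
def mulOp (hm : MemLp m ∞ μ) : Lp ℂ 2 μ →L[ℂ] Lp ℂ 2 μ :=
  (ContinuousLinearMap.mul ℂ ℂ).holderL μ ∞ 2 2 (hm.ofReal (K := ℂ)).toLp

lemma coeFn_mulOp (hm : MemLp m ∞ μ) (f : Lp ℂ 2 μ) :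
    mulOp hm f =ᵐ[μ] fun x => (m x : ℂ) * f x := by
  filter_upwards [(ContinuousLinearMap.mul ℂ ℂ).coeFn_holder (r := 2)
    (hm.ofReal (K := ℂ)).toLp f, (hm.ofReal (K := ℂ)).coeFn_toLp] with x hmul hx
  exact hmul.trans (by rw [hx]; rfl)

lemma inner_mulOp_left (hm : MemLp m ∞ μ) (f g : Lp ℂ 2 μ) :
    inner ℂ (mulOp hm f) g = inner ℂ f (mulOp hm g) := by
  rw [L2.inner_def, L2.inner_def]
  refine integral_congr_ae ?_
  filter_upwards [coeFn_mulOp hm f, coeFn_mulOp hm g] with x hf hg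
  simp only [hf, hg, RCLike.inner_apply, map_mul, Complex.conj_ofReal]
  ring

lemma adjoint_mulOp (hm : MemLp m ∞ μ) :
    ContinuousLinearMap.adjoint (mulOp hm) = mulOp hm :=
  ((ContinuousLinearMap.eq_adjoint_iff _ _).2 (inner_mulOp_left hm)).symm

lemma memLp_top_indicator_one {S : Set α} (hS : MeasurableSet S) :
    MemLp (S.indicator (1 : α → ℝ)) ∞ μ :=
  (memLp_top_const 1).indicator hS

lemma sub_mulOp_indicator {S : Set α} (hS : MeasurableSet S) (f : Lp ℂ 2 μ) :
    f - mulOp (memLp_top_indicator_one hS) f = mulOp (memLp_top_indicator_one hS.compl) f := by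
  refine Lp.ext ?_
  filter_upwards [Lp.coeFn_sub f (mulOp (memLp_top_indicator_one hS) f),
    coeFn_mulOp (memLp_top_indicator_one hS) f,
    coeFn_mulOp (memLp_top_indicator_one hS.compl) f] with x hsub hmul hmulc
  rw [hsub, Pi.sub_apply, hmul, hmulc]
  by_cases hx : x ∈ S <;> simp [hx]

lemma enorm_sq_eq_lintegral (f : Lp ℂ 2 μ) : ‖f‖ₑ ^ 2 = ∫⁻ x, ‖f x‖ₑ ^ 2 ∂μ := by
  rw [Lp.enorm_def, eLpNorm_eq_lintegral_rpow_enorm_toReal two_ne_zero ENNReal.ofNat_ne_top]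
  simp only [ENNReal.toReal_ofNat, ENNReal.rpow_ofNat]
  rw [← ENNReal.rpow_ofNat, ← ENNReal.rpow_mul]
  norm_num

end Multiplication

/-! ### Hilbert–Schmidt operators are compact -/

section HilbertSchmidt

variable {α : Type*} [MeasurableSpace α] {μ : Measure α}

lemma memLp_two_mul_conj [SFinite μ] (φ f : Lp ℂ 2 μ) :
    MemLp (fun p : α × α => φ p.1 * conj (f p.2)) 2 (μ.prod μ) := by
  have hmeas : StronglyMeasurable fun p : α × α => φ p.1 * conj (f p.2) :=
    ((Lp.stronglyMeasurable φ).comp_measurable measurable_fst).mul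
      (RCLike.continuous_conj.comp_stronglyMeasurable
        ((Lp.stronglyMeasurable f).comp_measurable measurable_snd))
  rw [memLp_two_iff_integrable_sq_norm hmeas.aestronglyMeasurable]
  refine ((Lp.memLp φ).integrable_norm_pow two_ne_zero |>.mul_prod
    ((Lp.memLp f).integrable_norm_pow two_ne_zero)).congr (.of_forall fun p => ?_)
  simp only [norm_mul, RCLike.norm_conj, mul_pow]

/-- The elementary tensor `φ ⊗ f̄`: the integral kernel of the rank-one operator `⟪f, ·⟫ φ`. -/
def elementaryTensor [SFinite μ] (φ f : Lp ℂ 2 μ) : Lp ℂ 2 (μ.prod μ) :=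
  (memLp_two_mul_conj φ f).toLp

lemma coeFn_elementaryTensor [SFinite μ] (φ f : Lp ℂ 2 μ) :
    elementaryTensor φ f =ᵐ[μ.prod μ] fun p => φ p.1 * conj (f p.2) :=
  (memLp_two_mul_conj φ f).coeFn_toLp

lemma inner_elementaryTensor [SFinite μ] (φ f φ' f' : Lp ℂ 2 μ) :
    inner ℂ (elementaryTensor φ f) (elementaryTensor φ' f') = inner ℂ φ φ' * inner ℂ f' f := by
  rw [L2.inner_def, L2.inner_def, L2.inner_def, ← integral_prod_mul]
  refine integral_congr_ae ?_
  filter_upwards [coeFn_elementaryTensor φ f, coeFn_elementaryTensor φ' f'] with p h h'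
  simp only [h, h', RCLike.inner_apply, map_mul, RCLike.conj_conj]
  ring

lemma norm_elementaryTensor [SFinite μ] (φ f : Lp ℂ 2 μ) :
    ‖elementaryTensor φ f‖ = ‖φ‖ * ‖f‖ := by
  have h := inner_elementaryTensor φ f φ f
  simp only [inner_self_eq_norm_sq_to_K] at h
  rw [← pow_left_inj₀ (norm_nonneg _) (by positivity) two_ne_zero, mul_pow]
  exact_mod_cast h

/-- The kernels `κ ∈ L²(μ × μ)` whose integral operator is compact. The operator is described
weakly, through its matrix elements `⟪φ, T f⟫`. -/
def compactKernels (μ : Measure α) [SFinite μ] : Submodule ℂ (Lp ℂ 2 (μ.prod μ)) where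
  carrier := {κ | ∃ T : Lp ℂ 2 μ →L[ℂ] Lp ℂ 2 μ, IsCompactOperator T ∧
    ∀ φ f, inner ℂ φ (T f) = inner ℂ (elementaryTensor φ f) κ}
  add_mem' := by
    rintro κ κ' ⟨T, hT, h⟩ ⟨T', hT', h'⟩
    exact ⟨T + T', hT.add hT', fun φ f => by
      rw [add_apply, inner_add_right, inner_add_right, h, h']⟩
  zero_mem' := ⟨0, isCompactOperator_zero, fun φ f => by simp⟩
  smul_mem' := by
    rintro c κ ⟨T, hT, h⟩
    exact ⟨c • T, hT.smul c, fun φ f => by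
      rw [smul_apply, inner_smul_right, inner_smul_right, h]⟩

lemma elementaryTensor_mem_compactKernels [SFinite μ] (φ f : Lp ℂ 2 μ) :
    elementaryTensor φ f ∈ compactKernels μ := by
  refine ⟨ContinuousLinearMap.toSpanSingleton ℂ φ ∘L innerSL ℂ f,
    (isCompactOperator_of_locallyCompactSpace_dom (innerSL ℂ f)).clm_comp
      (ContinuousLinearMap.toSpanSingleton ℂ φ), fun φ' f' => ?_⟩
  rw [inner_elementaryTensor]
  simp [inner_smul_right, mul_comm]

lemma ae_eq_zero_of_forall_setIntegral_prod_eq_zero {β E : Type*} [MeasurableSpace β]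
    [NormedAddCommGroup E] [NormedSpace ℝ E] [CompleteSpace E] {ν : Measure (α × β)}
    {κ : α × β → E} (hκ : Integrable κ ν)
    (h : ∀ s t, MeasurableSet s → MeasurableSet t → ∫ p in s ×ˢ t, κ p ∂ν = 0) :
    κ =ᵐ[ν] 0 := by
  refine hκ.ae_eq_zero_of_forall_setIntegral_eq_zero fun s hs _ => ?_
  refine MeasurableSpace.induction_on_inter (C := fun s _ => ∫ p in s, κ p ∂ν = 0)
    generateFrom_prod.symm isPiSystem_prod (by simp) ?_ ?_ ?_ s hs
  · rintro _ ⟨a, ha, b, hb, rfl⟩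
    exact h a b ha hb
  · intro t ht hκt
    have hadd := integral_add_compl ht hκ
    have huniv := h univ univ .univ .univ
    rw [univ_prod_univ, setIntegral_univ] at huniv
    rwa [hκt, huniv, zero_add] at hadd
  · intro F hdisj hF hκF
    rw [integral_iUnion hF hdisj hκ.integrableOn]
    simp [hκF]

variable [IsFiniteMeasure μ]

lemma inner_elementaryTensor_indicatorConstLp {s t : Set α} (hs : MeasurableSet s)
    (ht : MeasurableSet t) (κ : Lp ℂ 2 (μ.prod μ)) :
    inner ℂ (elementaryTensor (indicatorConstLp 2 hs (measure_ne_top μ s) (1 : ℂ))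
      (indicatorConstLp 2 ht (measure_ne_top μ t) (1 : ℂ))) κ
      = ∫ p in s ×ˢ t, κ p ∂μ.prod μ := by
  rw [L2.inner_def, ← integral_indicator (hs.prod ht)]
  refine integral_congr_ae ?_
  filter_upwards [Measure.quasiMeasurePreserving_fst.ae
      (indicatorConstLp_coeFn (hs := hs) (hμs := measure_ne_top μ s) (c := (1 : ℂ))),
    Measure.quasiMeasurePreserving_snd.ae
      (indicatorConstLp_coeFn (hs := ht) (hμs := measure_ne_top μ t) (c := (1 : ℂ))),
    coeFn_elementaryTensor (indicatorConstLp 2 hs (measure_ne_top μ s) (1 : ℂ))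
      (indicatorConstLp 2 ht (measure_ne_top μ t) (1 : ℂ))] with p hps hpt hp
  rw [hp, hps, hpt, RCLike.inner_apply]
  by_cases h₁ : p.1 ∈ s <;> by_cases h₂ : p.2 ∈ t <;> simp [indicator, h₁, h₂]

lemma compactKernels_topologicalClosure : (compactKernels μ).topologicalClosure = ⊤ := by
  rw [Submodule.topologicalClosure_eq_top_iff, Submodule.eq_bot_iff]
  intro κ hκ
  rw [Lp.eq_zero_iff_ae_eq_zero]
  refine ae_eq_zero_of_forall_setIntegral_prod_eq_zero ((Lp.memLp κ).integrable one_le_two)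
    fun s t hs ht => ?_
  rw [← inner_elementaryTensor_indicatorConstLp hs ht κ]
  exact (Submodule.mem_orthogonal _ _).1 hκ _ (elementaryTensor_mem_compactKernels _ _)

lemma opNorm_le_of_norm_inner_le {E F : Type*} [NormedAddCommGroup E] [InnerProductSpace ℂ E]
    [NormedAddCommGroup F] [InnerProductSpace ℂ F] {T : E →L[ℂ] F} {C : ℝ} (hC : 0 ≤ C)
    (h : ∀ φ f, ‖inner ℂ φ (T f)‖ ≤ C * ‖φ‖ * ‖f‖) : ‖T‖ ≤ C := by
  refine ContinuousLinearMap.opNorm_le_of_re_inner_le hC fun f φ hf hφ => ?_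
  have hle := h φ f
  rw [hf, hφ, mul_one, mul_one, norm_inner_symm] at hle
  exact (RCLike.re_le_norm _).trans hle

lemma isCompactOperator_of_forall_norm_sub_lt {E : Type*} [NormedAddCommGroup E]
    [NormedSpace ℂ E] [CompleteSpace E] {T : E →L[ℂ] E}
    (h : ∀ ε > 0, ∃ T' : E →L[ℂ] E, IsCompactOperator T' ∧ ‖T - T'‖ < ε) :
    IsCompactOperator T := by
  refine isClosed_setOfPred_isCompactOperator.closure_subset (Metric.mem_closure_iff.2 ?_)
  intro ε hε
  obtain ⟨T', hT', hTT'⟩ := h ε hε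
  exact ⟨T', hT', by rwa [dist_eq_norm]⟩

theorem isCompactOperator_of_inner_eq {T : Lp ℂ 2 μ →L[ℂ] Lp ℂ 2 μ} {κ : Lp ℂ 2 (μ.prod μ)}
    (h : ∀ φ f, inner ℂ φ (T f) = inner ℂ (elementaryTensor φ f) κ) : IsCompactOperator T := by
  refine isCompactOperator_of_forall_norm_sub_lt fun ε hε => ?_
  have hκ : κ ∈ closure (compactKernels μ : Set (Lp ℂ 2 (μ.prod μ))) := by
    rw [← Submodule.topologicalClosure_coe, compactKernels_topologicalClosure]
    trivial
  obtain ⟨κ', ⟨T', hT', h'⟩, hκκ'⟩ := Metric.mem_closure_iff.1 hκ ε hε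
  rw [dist_eq_norm] at hκκ'
  refine ⟨T', hT', (opNorm_le_of_norm_inner_le (norm_nonneg _) fun φ f => ?_).trans_lt hκκ'⟩
  calc ‖inner ℂ φ ((T - T') f)‖
      = ‖inner ℂ (elementaryTensor φ f) (κ - κ')‖ := by
        rw [sub_apply, inner_sub_right, h, h', inner_sub_right]
    _ ≤ ‖elementaryTensor φ f‖ * ‖κ - κ'‖ := norm_inner_le_norm _ _
    _ = ‖κ - κ'‖ * ‖φ‖ * ‖f‖ := by rw [norm_elementaryTensor]; ring

end HilbertSchmidt

/-! ### Compactness of the collision operator -/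

section CutOff

variable {α : Type*} [MeasurableSpace α] {μ : Measure α} [SFinite μ] {V : α → ℝ}
  {k : α → α → ℝ} {S : Set (α × α)}

namespace IsSymmKernel

/-- The part of `kernelOp` coming from the pairs in `S`. -/
def cutoffOp (hk : IsSymmKernel μ V k) (hS : MeasurableSet S) : Lp ℂ 2 μ →L[ℂ] Lp ℂ 2 μ :=
  ContinuousLinearMap.adjoint
      (pullback hk.isWeight hk.measurePreserving_fst).toContinuousLinearMap ∘L
    mulOp (memLp_top_indicator_one hS) ∘L
    (pullback hk.isWeight hk.measurePreserving_snd).toContinuousLinearMap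

lemma inner_cutoffOp_eq (hk : IsSymmKernel μ V k) (hS : MeasurableSet S) (φ f : Lp ℂ 2 μ) :
    inner ℂ φ (hk.cutoffOp hS f) = inner ℂ (pullback hk.isWeight hk.measurePreserving_fst φ)
      (mulOp (memLp_top_indicator_one hS)
        (pullback hk.isWeight hk.measurePreserving_snd f)) := by
  simp only [cutoffOp, ContinuousLinearMap.comp_apply, ContinuousLinearMap.adjoint_inner_right,
    LinearIsometry.coe_toContinuousLinearMap]

lemma inner_cutoffOp (hk : IsSymmKernel μ V k) (hS : MeasurableSet S) (φ f : Lp ℂ 2 μ) :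
    inner ℂ φ (hk.cutoffOp hS f)
      = ∫ p, ((S.indicator (normalizedKernel V k) p : ℝ) : ℂ) * (f p.2 * conj (φ p.1))
          ∂μ.prod μ := by
  have hcut : (fun p => inner ℂ (pullback hk.isWeight hk.measurePreserving_fst φ p)
      (mulOp (memLp_top_indicator_one hS)
        (pullback hk.isWeight hk.measurePreserving_snd f) p)) =ᵐ[kernelMeasure μ k]
      S.indicator fun p => inner ℂ (((V p.1 ^ (-(1 : ℝ) / 2) : ℝ) : ℂ) * φ p.1)
        (((V p.2 ^ (-(1 : ℝ) / 2) : ℝ) : ℂ) * f p.2) := by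
    filter_upwards [hk.inner_pullback_ae_eq φ f, coeFn_mulOp (memLp_top_indicator_one hS)
      (pullback hk.isWeight hk.measurePreserving_snd f)] with p hp hmul
    rw [hmul]
    by_cases hpS : p ∈ S
    · simpa only [indicator_of_mem hpS, Pi.one_apply, Complex.ofReal_one, one_mul] using hp
    · simp [hpS]
  rw [inner_cutoffOp_eq, L2.inner_def, integral_congr_ae hcut]
  refine (integral_withDensity_eq_integral_toReal_smul₀ hk.measurable.ennreal_ofReal.aemeasurable
    (.of_forall fun _ => ENNReal.ofReal_lt_top) _).trans
      (integral_congr_ae (.of_forall fun p => ?_))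
  have hp := congrFun (hk.toReal_smul_inner_eq φ f) p
  by_cases hpS : p ∈ S
  · simpa only [indicator_of_mem hpS] using hp
  · simp [hpS]

lemma isCompactOperator_cutoffOp [IsFiniteMeasure μ] (hk : IsSymmKernel μ V k)
    (hS : MeasurableSet S) (hL : MemLp (S.indicator (normalizedKernel V k)) 2 (μ.prod μ)) :
    IsCompactOperator (hk.cutoffOp hS) := by
  refine isCompactOperator_of_inner_eq (κ := (hL.ofReal (K := ℂ)).toLp) fun φ f => ?_
  rw [inner_cutoffOp, L2.inner_def]
  refine integral_congr_ae ?_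
  filter_upwards [coeFn_elementaryTensor φ f, (hL.ofReal (K := ℂ)).coeFn_toLp] with p hp hκ
  rw [hp, hκ, RCLike.inner_apply, map_mul, RCLike.conj_conj, mul_comm (conj (φ p.1))]
  rfl

lemma setLIntegral_kernelMeasure (hk : IsSymmKernel μ V k) (hS : MeasurableSet S)
    {g : α × α → ℝ≥0∞} (hg : Measurable g) :
    ∫⁻ p in S, g p ∂kernelMeasure μ k
      = ∫⁻ x, ∫⁻ y in Prod.mk x ⁻¹' S, ENNReal.ofReal (k x y) * g (x, y) ∂μ ∂μ := by
  rw [← lintegral_indicator hS, hk.lintegral_kernelMeasure (hg.indicator hS)]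
  refine lintegral_congr fun x => ?_
  rw [← lintegral_indicator (measurable_prodMk_left hS)]
  refine lintegral_congr fun y => ?_
  by_cases h : (x, y) ∈ S <;> simp [h]

lemma enorm_sq_mulOp_indicator_pullback_le (hk : IsSymmKernel μ V k) (hS : MeasurableSet S)
    {δ : ℝ≥0∞} (h : ∀ᵐ x ∂μ, ∫⁻ y in Prod.mk x ⁻¹' S, ENNReal.ofReal (k x y) ∂μ
      ≤ δ * ENNReal.ofReal (V x)) (φ : Lp ℂ 2 μ) :
    ‖mulOp (memLp_top_indicator_one hS) (pullback hk.isWeight hk.measurePreserving_fst φ)‖ₑ ^ 2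
      ≤ δ * ‖φ‖ₑ ^ 2 := by
  have hcut : (fun p => ‖mulOp (memLp_top_indicator_one hS)
      (pullback hk.isWeight hk.measurePreserving_fst φ) p‖ₑ ^ 2) =ᵐ[kernelMeasure μ k]
      S.indicator fun p => ‖((V p.1 ^ (-(1 : ℝ) / 2) : ℝ) : ℂ) * φ p.1‖ₑ ^ 2 := by
    filter_upwards [coeFn_pullback hk.isWeight hk.measurePreserving_fst φ, coeFn_mulOp
      (memLp_top_indicator_one hS) (pullback hk.isWeight hk.measurePreserving_fst φ)] with p hp hmul
    rw [hmul, hp]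
    by_cases hpS : p ∈ S <;> simp [hpS]
  have hφ : Measurable fun x => ‖((V x ^ (-(1 : ℝ) / 2) : ℝ) : ℂ) * φ x‖ₑ ^ 2 :=
    (hk.isWeight.measurable_rpow_mul φ).enorm.pow_const _
  have hkx (x : α) : Measurable fun y => ENNReal.ofReal (k x y) :=
    (hk.measurable.comp measurable_prodMk_left).ennreal_ofReal
  rw [enorm_sq_eq_lintegral, enorm_sq_eq_lintegral φ, lintegral_congr_ae hcut,
    lintegral_indicator hS, hk.setLIntegral_kernelMeasure hS
      (g := fun p => ‖((V p.1 ^ (-(1 : ℝ) / 2) : ℝ) : ℂ) * φ p.1‖ₑ ^ 2) (hφ.comp measurable_fst),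
    ← lintegral_const_mul _ ((Lp.stronglyMeasurable φ).measurable.enorm.pow_const _)]
  refine lintegral_mono_ae ?_
  filter_upwards [h, hk.isWeight.ae_pos] with x hx hVx
  rw [lintegral_mul_const _ (hkx x)]
  calc (∫⁻ y in Prod.mk x ⁻¹' S, ENNReal.ofReal (k x y) ∂μ)
        * ‖((V x ^ (-(1 : ℝ) / 2) : ℝ) : ℂ) * φ x‖ₑ ^ 2
      ≤ δ * ENNReal.ofReal (V x) * ‖((V x ^ (-(1 : ℝ) / 2) : ℝ) : ℂ) * φ x‖ₑ ^ 2 := by gcongr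
    _ = δ * ‖φ x‖ₑ ^ 2 := by rw [mul_assoc, ofReal_mul_enorm_rpow_neg_half_mul_sq hVx]

lemma norm_kernelOp_sub_cutoffOp_le (hk : IsSymmKernel μ V k) (hS : MeasurableSet S) {ε : ℝ}
    (hε : 0 ≤ ε) (h : ∀ᵐ x ∂μ, ∫⁻ y in Prod.mk x ⁻¹' Sᶜ, ENNReal.ofReal (k x y) ∂μ
      ≤ ENNReal.ofReal (ε ^ 2) * ENNReal.ofReal (V x)) :
    ‖hk.kernelOp - hk.cutoffOp hS‖ ≤ ε := by
  have hcut (φ : Lp ℂ 2 μ) : ‖mulOp (memLp_top_indicator_one hS.compl)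
      (pullback hk.isWeight hk.measurePreserving_fst φ)‖ ≤ ε * ‖φ‖ := by
    have hsq := ENNReal.toReal_mono (by finiteness)
      (hk.enorm_sq_mulOp_indicator_pullback_le hS.compl h φ)
    rw [ENNReal.toReal_mul, ENNReal.toReal_pow, ENNReal.toReal_pow, toReal_enorm, toReal_enorm,
      ENNReal.toReal_ofReal (sq_nonneg ε), ← mul_pow] at hsq
    exact le_of_sq_le_sq hsq (by positivity)
  refine opNorm_le_of_norm_inner_le hε fun φ f => ?_
  calc ‖inner ℂ φ ((hk.kernelOp - hk.cutoffOp hS) f)‖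
      = ‖inner ℂ (mulOp (memLp_top_indicator_one hS.compl)
          (pullback hk.isWeight hk.measurePreserving_fst φ))
          (pullback hk.isWeight hk.measurePreserving_snd f)‖ := by
        rw [sub_apply, inner_sub_right, inner_cutoffOp_eq, kernelOp,
          ContinuousLinearMap.comp_apply, ContinuousLinearMap.adjoint_inner_right,
          LinearIsometry.coe_toContinuousLinearMap, LinearIsometry.coe_toContinuousLinearMap,
          ← inner_sub_right, sub_mulOp_indicator hS, inner_mulOp_left]
    _ ≤ ε * ‖φ‖ * ‖f‖ := by
        refine (norm_inner_le_norm _ _).trans ?_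
        rw [LinearIsometry.norm_map]
        exact mul_le_mul_of_nonneg_right (hcut φ) (norm_nonneg f)

/-- The pairs outside `S` carry a small share of the marginal, so they contribute an operator of
small norm (Schur test), whereas those in `S` contribute a Hilbert–Schmidt operator. -/
theorem isCompactOperator_kernelOp [IsFiniteMeasure μ] (hk : IsSymmKernel μ V k)
    (h : ∀ δ > 0, ∃ S : Set (α × α), MeasurableSet S ∧
      MemLp (S.indicator (normalizedKernel V k)) 2 (μ.prod μ) ∧
      ∀ᵐ x ∂μ, ∫⁻ y in Prod.mk x ⁻¹' Sᶜ, ENNReal.ofReal (k x y) ∂μ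
        ≤ ENNReal.ofReal δ * ENNReal.ofReal (V x)) :
    IsCompactOperator hk.kernelOp := by
  refine isCompactOperator_of_forall_norm_sub_lt fun ε hε => ?_
  obtain ⟨S, hS, hL, hcompl⟩ := h ((ε / 2) ^ 2) (by positivity)
  exact ⟨hk.cutoffOp hS, hk.isCompactOperator_cutoffOp hS hL,
    (hk.norm_kernelOp_sub_cutoffOp_le hS (by positivity) hcompl).trans_lt (half_lt_self hε)⟩

end IsSymmKernel

end CutOff

lemma VV_rpow_neg_half_le {x : ℝ} (hx : x ∈ Ioo 0 (2 * π)) :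
    VV x ^ (-(1 : ℝ) / 2) ≤ sin (x / 2) ^ (1 / 6 : ℝ) := by
  have hs := sin_half_pos hx
  have hV := VV_pos hx
  have hinv : (VV x)⁻¹ ≤ sin (x / 2) ^ (1 / 3 : ℝ) :=
    (inv_le_iff_one_le_mul₀' hV).2 (one_le_VV_mul_sin_half_rpow hx)
  calc VV x ^ (-(1 : ℝ) / 2) = (VV x)⁻¹ ^ (1 / 2 : ℝ) := by
        rw [inv_rpow hV.le, ← rpow_neg hV.le, neg_div]
    _ ≤ (sin (x / 2) ^ (1 / 3 : ℝ)) ^ (1 / 2 : ℝ) := by gcongr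
    _ = sin (x / 2) ^ (1 / 6 : ℝ) := by rw [← rpow_mul hs.le]; norm_num

lemma normalizedKernel_VV_le {k : ℝ → ℝ → ℝ} {C x y : ℝ} (hk : 0 ≤ k x y)
    (hx : x ∈ Ioo 0 (2 * π)) (hy : y ∈ Ioo 0 (2 * π))
    (h : k x y ≤ C * (sin (x / 2) ^ (-(1 / 2) : ℝ) * sin (y / 2) ^ (-(1 / 2) : ℝ))) :
    normalizedKernel VV k (x, y)
      ≤ C * (sin (x / 2) ^ (-(1 / 3) : ℝ) * sin (y / 2) ^ (-(1 / 3) : ℝ)) := by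
  have hsx := sin_half_pos hx
  have hsy := sin_half_pos hy
  have hVy := VV_nonneg y
  calc VV x ^ (-(1 : ℝ) / 2) * k x y * VV y ^ (-(1 : ℝ) / 2)
      ≤ sin (x / 2) ^ (1 / 6 : ℝ)
          * (C * (sin (x / 2) ^ (-(1 / 2) : ℝ) * sin (y / 2) ^ (-(1 / 2) : ℝ)))
          * sin (y / 2) ^ (1 / 6 : ℝ) := by
        gcongr
        · exact mul_nonneg (by positivity) (hk.trans h)
        · exact VV_rpow_neg_half_le hx
        · exact VV_rpow_neg_half_le hy
    _ = C * ((sin (x / 2) ^ (1 / 6 : ℝ) * sin (x / 2) ^ (-(1 / 2) : ℝ))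
          * (sin (y / 2) ^ (1 / 6 : ℝ) * sin (y / 2) ^ (-(1 / 2) : ℝ))) := by ring
    _ = C * (sin (x / 2) ^ (-(1 / 3) : ℝ) * sin (y / 2) ^ (-(1 / 3) : ℝ)) := by
        rw [← rpow_add hsx, ← rpow_add hsy]; norm_num

lemma memLp_two_sin_half_rpow_mul : MemLp (fun p : ℝ × ℝ =>
    sin (p.1 / 2) ^ (-(1 / 3) : ℝ) * sin (p.2 / 2) ^ (-(1 / 3) : ℝ)) 2 (muI.prod muI) := by
  rw [memLp_two_iff_integrable_sq (by fun_prop)]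
  have hInt : Integrable (fun x : ℝ => sin (x / 2) ^ (-(2 / 3) : ℝ)) muI := by
    refine ⟨Measurable.aestronglyMeasurable (by fun_prop), ?_⟩
    rw [hasFiniteIntegral_iff_ofReal]
    · exact lintegral_sin_half_rpow_lt_top (by norm_num) (by norm_num)
    · filter_upwards [ae_muI_mem_Ioo] with x hx using rpow_nonneg (sin_half_pos hx).le _
  refine (hInt.mul_prod hInt).congr ?_
  filter_upwards [ae_prod_mem_Ioo] with p hp
  rw [mul_pow, ← rpow_natCast, ← rpow_natCast, ← rpow_mul (sin_half_pos hp.1).le,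
    ← rpow_mul (sin_half_pos hp.2).le]
  norm_num

lemma memLp_two_indicator_normalizedKernel {k : ℝ → ℝ → ℝ} (hk : IsSymmKernel muI VV k)
    {S : Set (ℝ × ℝ)} (hS : MeasurableSet S) {C : ℝ}
    (h : ∀ x ∈ Ioo 0 (2 * π), ∀ y ∈ Ioo 0 (2 * π), (x, y) ∈ S →
      k x y ≤ C * (sin (x / 2) ^ (-(1 / 2) : ℝ) * sin (y / 2) ^ (-(1 / 2) : ℝ))) :
    MemLp (S.indicator (normalizedKernel VV k)) 2 (muI.prod muI) := by
  have hmeas : Measurable (normalizedKernel VV k) :=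
    (((measurable_VV.pow_const _).comp measurable_fst).mul hk.measurable).mul
      ((measurable_VV.pow_const _).comp measurable_snd)
  rw [memLp_indicator_iff_restrict hS]
  refine (memLp_two_sin_half_rpow_mul.restrict S).of_le_mul (c := C)
    hmeas.aestronglyMeasurable.restrict ?_
  filter_upwards [ae_restrict_of_ae ae_prod_mem_Ioo, ae_restrict_mem hS] with p hp hpS
  have hnonneg : 0 ≤ normalizedKernel VV k p :=
    mul_nonneg (mul_nonneg (rpow_nonneg (VV_nonneg _) _) (hk.nonneg _ _))
      (rpow_nonneg (VV_nonneg _) _)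
  rw [norm_of_nonneg hnonneg, norm_of_nonneg (mul_nonneg (rpow_nonneg (sin_half_pos hp.1).le _)
    (rpow_nonneg (sin_half_pos hp.2).le _))]
  exact normalizedKernel_VV_le (hk.nonneg _ _) hp.1 hp.2 (h _ hp.1 _ hp.2 hpS)

lemma isCompactOperator_kernelOp_K2 : IsCompactOperator isSymmKernel_K2.kernelOp := by
  refine isSymmKernel_K2.isCompactOperator_kernelOp fun δ _ => ⟨univ, .univ, ?_, by simp⟩
  refine memLp_two_indicator_normalizedKernel isSymmKernel_K2 .univ (C := 1) fun x hx y hy _ => ?_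
  rw [one_mul]
  exact K2_le hx hy

lemma isCompactOperator_kernelOp_K1 : IsCompactOperator isSymmKernel_K1.kernelOp := by
  refine isSymmKernel_K1.isCompactOperator_kernelOp fun δ hδ => ?_
  obtain ⟨ε, hε, hε₁, hεδ⟩ : ∃ ε : ℝ, 0 < ε ∧ ε ≤ 1 ∧ 3200 * √ε ≤ δ := by
    refine ⟨min 1 ((δ / 3200) ^ 2), by positivity, min_le_left _ _, ?_⟩
    have hsqrt : √(min 1 ((δ / 3200) ^ 2)) ≤ δ / 3200 :=
      (sqrt_le_left (by positivity)).2 (min_le_right _ _)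
    linarith
  refine ⟨(nearSingular ε)ᶜ, (measurableSet_nearSingular ε).compl, ?_, ?_⟩
  · exact memLp_two_indicator_normalizedKernel isSymmKernel_K1 (measurableSet_nearSingular ε).compl
      fun x hx y hy hxy => K1_le_of_notMem_nearSingular hε hx hy hxy
  · filter_upwards [ae_muI_mem_Ioo] with x hx
    rw [compl_compl]
    exact (setLIntegral_K1_nearSingular_le hx hε₁).trans (by gcongr)

theorem isCompactOperator_gainOp : IsCompactOperator gainOp :=
  (isCompactOperator_kernelOp_K2.smul (2 : ℂ)).sub isCompactOperator_kernelOp_K1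

/-! ### Parity and the linearized operator -/

/-- The parity operator `(P f)(x) = f(2π - x)`. -/
def parityOp : Lp ℂ 2 muI →L[ℂ] Lp ℂ 2 muI :=
  (Lp.compMeasurePreservingₗᵢ ℂ _ measurePreserving_reflect).toContinuousLinearMap

lemma coeFn_parityOp (f : Lp ℂ 2 muI) : parityOp f =ᵐ[muI] fun x => f (2 * π - x) :=
  Lp.coeFn_compMeasurePreserving f measurePreserving_reflect

lemma commute_gainOp_parityOp : Commute gainOp parityOp := by
  refine ContinuousLinearMap.ext fun f => Lp.ext ?_
  filter_upwards [coeFn_gainOp (parityOp f), coeFn_parityOp (gainOp f),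
    measurePreserving_reflect.quasiMeasurePreserving.ae (coeFn_gainOp f)] with x hBP hPB hB
  refine hBP.trans (Eq.trans ?_ (hPB.trans hB).symm)
  refine Eq.trans (integral_congr_ae ?_) (measurePreserving_reflect.integral_comp
    (MeasurableEquiv.subLeft (2 * π)).measurableEmbedding _)
  filter_upwards [coeFn_parityOp f] with y hy
  rw [hy, VV_reflect, VV_reflect, K1_reflect, K2_reflect]

lemma commute_mulOp_parityOp {m : ℝ → ℝ} (hm : MemLp m ∞ muI)
    (hreflect : ∀ x, m (2 * π - x) = m x) : Commute (mulOp hm) parityOp := by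
  refine ContinuousLinearMap.ext fun f => Lp.ext ?_
  filter_upwards [coeFn_mulOp hm (parityOp f), coeFn_parityOp (mulOp hm f), coeFn_parityOp f,
    measurePreserving_reflect.quasiMeasurePreserving.ae (coeFn_mulOp hm f)] with x hMP hPM hP hM
  refine hMP.trans (Eq.trans ?_ (hPM.trans hM).symm)
  rw [hP, hreflect]

lemma WW_nonneg (x : ℝ) : 0 ≤ WW x := mul_nonneg (sq_nonneg _) (VV_nonneg x)

lemma WW_reflect (x : ℝ) : WW (2 * π - x) = WW x := by
  rw [WW, WW, VV_reflect, sin_half_reflect]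

lemma exists_WW_le : ∃ C, ∀ x ∈ Ioo 0 (2 * π), WW x ≤ C := by
  obtain ⟨C, hC, hVV⟩ := exists_VV_le
  refine ⟨C, fun x hx => ?_⟩
  have hs := sin_half_pos hx
  calc WW x ≤ sin (x / 2) ^ 2 * (sin (x / 2) ^ (-(1 / 2) : ℝ) * C) :=
        mul_le_mul_of_nonneg_left (hVV x hx) (sq_nonneg _)
    _ = sin (x / 2) ^ (3 / 2 : ℝ) * C := by
        rw [← mul_assoc, ← rpow_natCast, ← rpow_add hs]; norm_num
    _ ≤ C := mul_le_of_le_one_left hC (rpow_le_one hs.le (sin_le_one _) (by norm_num))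

lemma memLp_top_sqrt_WW : MemLp (fun x => √(WW x)) ∞ muI := by
  obtain ⟨C, hC⟩ := exists_WW_le
  have hmeas : Measurable WW := Measurable.mul (by fun_prop) measurable_VV
  refine memLp_top_of_bound hmeas.sqrt.aestronglyMeasurable √C ?_
  filter_upwards [ae_muI_mem_Ioo] with x hx
  rw [norm_of_nonneg (sqrt_nonneg _)]
  exact sqrt_le_sqrt (hC x hx)

/-- The operator `L̃ = W^(1/2) (1 - B) W^(1/2)`. -/
def linearizedOp : Lp ℂ 2 muI →L[ℂ] Lp ℂ 2 muI :=
  mulOp memLp_top_sqrt_WW ∘L (1 - gainOp) ∘L mulOp memLp_top_sqrt_WW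

lemma isPositive_linearizedOp : linearizedOp.IsPositive := by
  have h := isPositive_one_sub_gainOp.conj_adjoint (mulOp memLp_top_sqrt_WW)
  rwa [adjoint_mulOp] at h

lemma commute_linearizedOp_parityOp : Commute linearizedOp parityOp := by
  have hW : Commute (mulOp memLp_top_sqrt_WW) parityOp :=
    commute_mulOp_parityOp _ fun x => by rw [WW_reflect]
  exact hW.mul_left (((Commute.one_left _).sub_left commute_gainOp_parityOp).mul_left hW)

lemma sqrt_WW_mul_VV_rpow_neg_half {x : ℝ} (hx : x ∈ Ioo 0 (2 * π)) :
    √(WW x) * VV x ^ (-(1 : ℝ) / 2) = omg x := by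
  have hV := VV_pos hx
  rw [WW, sqrt_mul (sq_nonneg _), sqrt_sq_eq_abs, sqrt_eq_rpow, mul_assoc, ← rpow_add hV, omg]
  norm_num

lemma coeFn_linearizedOp (f : Lp ℂ 2 muI) :
    linearizedOp f =ᵐ[muI] fun x => (WW x : ℂ) * f x
      + ∫ y in II, ((omg x * (K1 x y - 2 * K2 x y) * omg y : ℝ) : ℂ) * f y := by
  set g := mulOp memLp_top_sqrt_WW f
  have hg := coeFn_mulOp memLp_top_sqrt_WW f
  change mulOp memLp_top_sqrt_WW (g - gainOp g) =ᵐ[muI] _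
  filter_upwards [coeFn_mulOp memLp_top_sqrt_WW (g - gainOp g), Lp.coeFn_sub g (gainOp g), hg,
    coeFn_gainOp g, ae_muI_mem_Ioo] with x hmul hsub hgx hB hx
  rw [hmul, hsub, Pi.sub_apply, hgx, hB, mul_sub, sub_eq_add_neg, ← mul_assoc,
    ← Complex.ofReal_mul, mul_self_sqrt (WW_nonneg x), ← integral_const_mul, ← integral_neg]
  congr 1
  refine integral_congr_ae ?_
  filter_upwards [hg, ae_muI_mem_Ioo] with y hgy hy
  rw [hgy, ← sqrt_WW_mul_VV_rpow_neg_half hx, ← sqrt_WW_mul_VV_rpow_neg_half hy]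
  push_cast
  ring

/-- **Proposition 2.3.**  There are operators `L̃`, `B`, `P` on `L²(I)` (acting respectively
as `W + ω(K₁−2K₂)ω`, as the integral operator with kernel `V^{−1/2}(2K₂−K₁)V^{−1/2}`, and as
the parity `ψ(x) ↦ ψ(2π−x)`) such that: `L̃` is bounded (it exists as a continuous linear
map), positive and self-adjoint; `B` is compact and self-adjoint; both commute with `P`;
`B ≤ 1`; and `Bψ = ψ` iff the periodic extension of `V^{−1/2}ψ` is a collisional
invariant. -/
theorem tildeL_and_B_properties :
    ∃ Lt Bop Pop : Lp ℂ 2 muI →L[ℂ] Lp ℂ 2 muI,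
      (∀ f : Lp ℂ 2 muI,
        (Lt f : ℝ → ℂ) =ᵐ[muI]
          fun x => ((WW x : ℝ) : ℂ) * f x +
            ∫ y in II, ((omg x * (K1 x y - 2 * K2 x y) * omg y : ℝ) : ℂ) * f y) ∧
      (∀ f : Lp ℂ 2 muI,
        (Bop f : ℝ → ℂ) =ᵐ[muI]
          fun x => ∫ y in II,
            ((VV x ^ (-(1 : ℝ) / 2) * (2 * K2 x y - K1 x y) * VV y ^ (-(1 : ℝ) / 2) : ℝ) : ℂ)
              * f y) ∧
      (∀ f : Lp ℂ 2 muI, (Pop f : ℝ → ℂ) =ᵐ[muI] fun x => f (2 * π - x)) ∧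
      IsSelfAdjoint Lt ∧ Lt.IsPositive ∧
      IsCompactOperator Bop ∧ IsSelfAdjoint Bop ∧
      Lt ∘L Pop = Pop ∘L Lt ∧ Bop ∘L Pop = Pop ∘L Bop ∧
      (1 - Bop).IsPositive ∧
      (∀ ψ : Lp ℂ 2 muI, Bop ψ = ψ ↔
        ∀ᵐ p : ℝ × ℝ,
          periodicVinvHalf ψ p.1 + periodicVinvHalf ψ (hFPU p.1 p.2)
            - periodicVinvHalf ψ p.2
            - periodicVinvHalf ψ (p.1 - p.2 + hFPU p.1 p.2) = 0) := by
  refine ⟨linearizedOp, gainOp, parityOp, coeFn_linearizedOp, coeFn_gainOp, coeFn_parityOp,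
    isPositive_linearizedOp.isSelfAdjoint, isPositive_linearizedOp,
    isCompactOperator_gainOp, isSelfAdjoint_gainOp,
    commute_linearizedOp_parityOp, commute_gainOp_parityOp,
    isPositive_one_sub_gainOp, fun ψ => ?_⟩
  calc gainOp ψ = ψ ↔ collisionDefect ψ = 0 := gainOp_eq_self_iff ψ
    _ ↔ _ := collisionDefect_eq_zero_iff ψ
    _ ↔ _ := ae_collisional_invariant_iff ψ
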